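/- Let (ν_J)_{J∈ℤ} be a modular invariant spectrum. Then for all reals a < b with b > A and every M > 0 there exists J_0 such that ν_J((a, b)) > M for every integer J ≥ J_0. In particular the large-spin spectrum becomes dense in every twist window overlapping (A, ∞). -/

import Mathlib

open MeasureTheory Filter Topology Real

noncomputable section

/-- A spectrum: a family of positive Borel measures on `ℝ`, each supported in
`{h | Tgap < h ∧ Tgap < h + J}`, with finite total Laplace-type sum. -/
def IsSpectrum (Tgap : ℝ) (ν : ℤ → Measure ℝ) : Prop :=
  (∀ J : ℤ, ν J {h : ℝ | ¬ (Tgap < h ∧ Tgap < h + (J : ℝ))} = 0) ∧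
  (∀ b b' : ℝ, 0 < b → 0 < b' →
    (∑' J : ℤ, ∫⁻ h : ℝ, ENNReal.ofReal (Real.exp (-b * h - b' * (h + (J : ℝ)))) ∂(ν J)) < ⊤)

/-- The reduced (Virasoro primary) partition function. -/
def Ztilde (A : ℝ) (ν : ℤ → Measure ℝ) (βL βR : ℂ) : ℂ :=
  Complex.exp ((A : ℂ) * (βL + βR)) *
    ((1 - Complex.exp (-βL)) * (1 - Complex.exp (-βR)) +
      ∑' J : ℤ, ∫ h : ℝ, Complex.exp (-βL * (h : ℂ) - βR * ((h : ℂ) + (J : ℂ))) ∂(ν J))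

/-- Modular invariance of the reduced partition function (principal square root). -/
def ModularInvariant (A : ℝ) (ν : ℤ → Measure ℝ) : Prop :=
  ∀ βL βR : ℂ, 0 < βL.re → 0 < βR.re →
    Ztilde A ν βL βR =
      ((4 * (π : ℂ) ^ 2) / (βL * βR)) ^ ((1 : ℂ) / 2) *
        Ztilde A ν (4 * (π : ℂ) ^ 2 / βL) (4 * (π : ℂ) ^ 2 / βR)

/-!
Integrating the partition function against `e^{Jw}` along the line `βR = w`, `βL = β - w` with
`Re w = ε` fixed extracts the Laplace transform at `β` of the single measure `ν J`. For small `ε`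
modular invariance replaces the integrand by its dual-channel expression, which near the real axis
is dominated by the left-moving vacuum term, proportional to `e^{4π²A/w} (1 - e^{-4π²/(β - w)})`:
the twist gap makes every other contribution exponentially smaller, and away from the real axis a
crude bound from modular invariance at real temperatures suffices. Choosing `ε = 2π√(A/J)` puts the
contour through the saddle of `Jw + 4π²A/w`, so the Laplace transform of `ν J`, divided by
`e^{4π√(AJ)} / √J`, converges for every `β > 0` to that of an explicit measure whose support is
`[A, ∞)`. Since polynomials in `e^{-h}` are uniformly dense, as in Karamata's Tauberian theorem,
this forces `ν J U → ∞` for every open `U` that the limit measure charges.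
-/

section Tauberian

variable {μ : Measure ℝ}

lemma integrable_exp_neg_mul_comp (hμ : ∀ᵐ h ∂μ, 0 ≤ h)
    (hint : Integrable (fun h => exp (-h)) μ) {f : ℝ → ℝ} (hf : Continuous f) :
    Integrable (fun h => exp (-h) * f (exp (-h))) μ := by
  obtain ⟨C, hC⟩ := isCompact_Icc.exists_bound_of_continuousOn (s := Set.Icc 0 1) hf.continuousOn
  refine hint.mul_bdd (c := C) (by fun_prop) ?_
  filter_upwards [hμ] with h hh
  exact hC _ ⟨(exp_pos _).le, exp_le_one_iff.2 (neg_nonpos.2 hh)⟩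

lemma integral_exp_neg_mul_polynomial_eval (hμ : ∀ᵐ h ∂μ, 0 ≤ h)
    (hint : Integrable (fun h => exp (-h)) μ) (Q : Polynomial ℝ) :
    ∫ h, exp (-h) * Q.eval (exp (-h)) ∂μ =
      ∑ n ∈ Finset.range (Q.natDegree + 1), Q.coeff n * ∫ h, exp (-(n + 1) * h) ∂μ := by
  have hpow (n : ℕ) (h : ℝ) : exp (-(n + 1) * h) = exp (-h) * exp (-h) ^ n := by
    rw [← exp_nat_mul, ← exp_add]
    ring_nf
  simp_rw [Polynomial.eval_eq_sum_range, Finset.mul_sum, mul_left_comm (exp _), hpow]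
  rw [integral_finsetSum]
  · simp_rw [integral_const_mul]
  · exact fun n _ => (integrable_exp_neg_mul_comp hμ hint (continuous_pow n)).const_mul _

lemma tendsto_integral_exp_neg_mul_polynomial_eval {ι : Type*} {l : Filter ι}
    {ν : ι → Measure ℝ} {N : ι → ℝ}
    (hν : ∀ i, ∀ᵐ h ∂ν i, 0 ≤ h) (hνint : ∀ i, Integrable (fun h => exp (-h)) (ν i))
    (hμ : ∀ᵐ h ∂μ, 0 ≤ h) (hμint : Integrable (fun h => exp (-h)) μ)
    (hlim : ∀ n : ℕ, Tendsto (fun i => (∫ h, exp (-(n + 1) * h) ∂ν i) / N i) l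
      (𝓝 (∫ h, exp (-(n + 1) * h) ∂μ))) (Q : Polynomial ℝ) :
    Tendsto (fun i => (∫ h, exp (-h) * Q.eval (exp (-h)) ∂ν i) / N i) l
      (𝓝 (∫ h, exp (-h) * Q.eval (exp (-h)) ∂μ)) := by
  simp_rw [integral_exp_neg_mul_polynomial_eval (hν _) (hνint _),
    integral_exp_neg_mul_polynomial_eval hμ hμint, Finset.sum_div, mul_div_assoc]
  exact tendsto_finsetSum _ fun n _ => (hlim n).const_mul _

lemma exists_polynomial_le_of_continuous {f : ℝ → ℝ} (hf : Continuous f) {η : ℝ} (hη : 0 < η) :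
    ∃ Q : Polynomial ℝ, ∀ t ∈ Set.Icc (0 : ℝ) 1, Q.eval t ≤ f t ∧ f t - η ≤ Q.eval t := by
  obtain ⟨P, hP⟩ := exists_polynomial_near_of_continuousOn 0 1 f hf.continuousOn (η / 2)
    (half_pos hη)
  refine ⟨P - Polynomial.C (η / 2), fun t ht => ?_⟩
  have := abs_lt.1 (hP t ht)
  rw [Polynomial.eval_sub, Polynomial.eval_C]
  constructor <;> linarith

lemma exists_continuous_comp_exp_neg_support_eq {U : Set ℝ} (hU : IsOpen U) :
    ∃ f : ℝ → ℝ, Continuous f ∧ (∀ t, f t ∈ Set.Icc 0 1) ∧ ∀ h, f (exp (-h)) ≠ 0 ↔ h ∈ U := by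
  have hV : IsOpen (Set.Ioi 0 ∩ (fun t => -log t) ⁻¹' U) :=
    (continuousOn_log.neg.mono fun t ht => ne_of_gt ht).isOpen_inter_preimage isOpen_Ioi hU
  obtain ⟨f, hsupp, hf, hrange⟩ := hV.exists_contDiff_support_eq (n := 0)
  refine ⟨f, hf.continuous, fun t => hrange ⟨t, rfl⟩, fun h => ?_⟩
  rw [← Function.mem_support, hsupp]
  simp [exp_pos]

lemma exists_polynomial_le_indicator_integral_pos (hμ : ∀ᵐ h ∂μ, 0 ≤ h)
    (hint : Integrable (fun h => exp (-h)) μ) {U : Set ℝ} (hU : IsOpen U) (hμU : μ U ≠ 0) :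
    ∃ Q : Polynomial ℝ,
      (∀ h, 0 ≤ h → exp (-h) * Q.eval (exp (-h)) ≤ U.indicator 1 h) ∧
      0 < ∫ h, exp (-h) * Q.eval (exp (-h)) ∂μ := by
  obtain ⟨f, hf, hf01, hfU⟩ := exists_continuous_comp_exp_neg_support_eq hU
  have hfint := integrable_exp_neg_mul_comp hμ hint hf
  have hf_pos : 0 < ∫ h, exp (-h) * f (exp (-h)) ∂μ := by
    rw [integral_pos_iff_support_of_nonneg
      (fun h => mul_nonneg (exp_pos _).le (hf01 _).1) hfint, pos_iff_ne_zero]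
    simpa [Function.support, exp_ne_zero, hfU] using hμU
  obtain ⟨η, hη, hη_lt⟩ := exists_pos_mul_lt hf_pos (∫ h, exp (-h) ∂μ)
  obtain ⟨Q, hQ⟩ := exists_polynomial_le_of_continuous hf hη
  have hexp_mem {h : ℝ} (hh : 0 ≤ h) : exp (-h) ∈ Set.Icc (0 : ℝ) 1 :=
    ⟨(exp_pos _).le, exp_le_one_iff.2 (neg_nonpos.2 hh)⟩
  refine ⟨Q, fun h hh => ?_, ?_⟩
  · refine (mul_le_mul_of_nonneg_left (hQ _ (hexp_mem hh)).1 (exp_pos _).le).trans ?_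
    by_cases hmem : h ∈ U
    · rw [Set.indicator_of_mem hmem]
      exact mul_le_one₀ (hexp_mem hh).2 (hf01 _).1 (hf01 _).2
    · rw [not_not.1 (mt (hfU h).1 hmem), mul_zero, Set.indicator_of_notMem hmem]
  · calc 0 < ∫ h, exp (-h) * f (exp (-h)) ∂μ - (∫ h, exp (-h) ∂μ) * η := sub_pos.2 hη_lt
      _ = ∫ h, (exp (-h) * f (exp (-h)) - exp (-h) * η) ∂μ := by
        rw [integral_sub hfint (hint.mul_const η), integral_mul_const]
      _ ≤ ∫ h, exp (-h) * Q.eval (exp (-h)) ∂μ := by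
        refine integral_mono_ae (hfint.sub (hint.mul_const η))
          (integrable_exp_neg_mul_comp hμ hint Q.continuous) ?_
        filter_upwards [hμ] with h hh
        rw [← mul_sub]
        exact mul_le_mul_of_nonneg_left (hQ _ (hexp_mem hh)).2 (exp_pos _).le

lemma ofReal_integral_le_measure_of_le_indicator {α : Type*} [MeasurableSpace α] {μ : Measure α}
    {f : α → ℝ} {s : Set α} (hs : MeasurableSet s) (hf : Integrable f μ)
    (hle : ∀ᵐ x ∂μ, f x ≤ s.indicator 1 x) : ENNReal.ofReal (∫ x, f x ∂μ) ≤ μ s := by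
  calc ENNReal.ofReal (∫ x, f x ∂μ) ≤ ENNReal.ofReal (∫ x, max (f x) 0 ∂μ) :=
        ENNReal.ofReal_le_ofReal (integral_mono hf hf.pos_part fun x => le_max_left _ _)
    _ = ∫⁻ x, ENNReal.ofReal (max (f x) 0) ∂μ :=
        ofReal_integral_eq_lintegral_ofReal hf.pos_part (.of_forall fun x => le_max_right _ _)
    _ ≤ ∫⁻ x, s.indicator 1 x ∂μ := by
        refine lintegral_mono_ae ?_
        filter_upwards [hle] with x hx
        by_cases hxs : x ∈ s <;> simp_all
    _ = μ s := lintegral_indicator_one hs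

theorem tendsto_measure_nhds_top_of_tendsto_laplace {ι : Type*} {l : Filter ι}
    {ν : ι → Measure ℝ} {N : ι → ℝ}
    (hν : ∀ i, ∀ᵐ h ∂ν i, 0 ≤ h) (hνint : ∀ i, Integrable (fun h => exp (-h)) (ν i))
    (hμ : ∀ᵐ h ∂μ, 0 ≤ h) (hμint : Integrable (fun h => exp (-h)) μ) (hN : Tendsto N l atTop)
    (hlim : ∀ n : ℕ, Tendsto (fun i => (∫ h, exp (-(n + 1) * h) ∂ν i) / N i) l
      (𝓝 (∫ h, exp (-(n + 1) * h) ∂μ)))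
    {U : Set ℝ} (hU : IsOpen U) (hμU : μ U ≠ 0) : Tendsto (fun i => ν i U) l (𝓝 ⊤) := by
  obtain ⟨Q, hQ_le, hQ_pos⟩ := exists_polynomial_le_indicator_integral_pos hμ hμint hU hμU
  have hQ_lim := tendsto_integral_exp_neg_mul_polynomial_eval hν hνint hμ hμint hlim Q
  have hQ_top : Tendsto (fun i => ∫ h, exp (-h) * Q.eval (exp (-h)) ∂ν i) l atTop := by
    refine (hQ_lim.pos_mul_atTop hQ_pos hN).congr' ?_
    filter_upwards [hN.eventually_gt_atTop 0] with i hi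
    exact div_mul_cancel₀ _ hi.ne'
  refine tendsto_nhds_top_mono' (ENNReal.tendsto_ofReal_atTop.comp hQ_top) fun i => ?_
  refine ofReal_integral_le_measure_of_le_indicator hU.measurableSet
    (integrable_exp_neg_mul_comp (hν i) (hνint i) Q.continuous) ?_
  filter_upwards [hν i] with h hh using hQ_le h hh

end Tauberian

section LimitMeasure

lemma integrable_gaussian_mul_ccosh {β : ℝ} (hβ : 0 < β) (k : ℂ) :
    Integrable fun x : ℝ => Complex.exp (-β * x ^ 2) * Complex.cosh (k * x) := by
  have hint (c : ℂ) := integrable_cexp_quadratic' (b := -β) (by simpa using hβ) c 0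
  refine (((hint k).add (hint (-k))).div_const 2).congr (.of_forall fun x => ?_)
  simp only [Pi.add_apply, Complex.cosh, add_zero, Complex.exp_add, neg_mul]
  ring

lemma integral_gaussian_mul_ccosh {β : ℝ} (hβ : 0 < β) (k : ℂ) :
    ∫ x : ℝ, Complex.exp (-β * x ^ 2) * Complex.cosh (k * x) =
      √(π / β) * Complex.exp (k ^ 2 / (4 * β)) := by
  have hint (c : ℂ) := integrable_cexp_quadratic' (b := -β) (by simpa using hβ) c 0
  have hval (c : ℂ) := integral_cexp_quadratic (b := -β) (by simpa using hβ) c 0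
  have hsqrt : ((π : ℂ) / β) ^ (1 / 2 : ℂ) = √(π / β) := by
    rw [sqrt_eq_rpow, Complex.ofReal_cpow (by positivity)]
    push_cast
    rfl
  have hsplit (x : ℝ) : Complex.exp (-β * x ^ 2) * Complex.cosh (k * x) =
      (Complex.exp (-β * x ^ 2 + k * x + 0) + Complex.exp (-β * x ^ 2 + -k * x + 0)) / 2 := by
    simp only [Complex.cosh, add_zero, Complex.exp_add, neg_mul]
    ring
  simp_rw [hsplit]
  rw [integral_div, integral_add (hint k) (hint (-k)), hval, hval, neg_sq, neg_neg, hsqrt,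
    zero_sub, mul_neg, div_neg, neg_neg]
  ring

/-- The inverse Laplace kernel of a Boltzmann factor `e^{4π²B/β}` of the dual channel:
its Gaussian transform in `β` is `√(π/β) e^{4π²B/β}`. As `√` vanishes on negative reals, it is
`cosh (4π√B x)` for `B ≥ 0` and `cos (4π√(-B) x)` for `B ≤ 0`. -/
def crossingKernel (B x : ℝ) : ℝ := cosh (4 * π * √B * x) * cos (4 * π * √(-B) * x)

@[fun_prop]
lemma continuous_crossingKernel (B : ℝ) : Continuous (crossingKernel B) := by
  unfold crossingKernel
  fun_prop

lemma crossingKernel_le (B x : ℝ) : crossingKernel B x ≤ cosh (4 * π * √B * x) :=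
  mul_le_of_le_one_right (cosh_pos _).le (cos_le_one _)

lemma crossingKernel_of_nonneg {B : ℝ} (hB : 0 ≤ B) (x : ℝ) :
    crossingKernel B x = cosh (4 * π * √B * x) := by
  simp [crossingKernel, sqrt_eq_zero_of_nonpos (neg_nonpos.2 hB)]

lemma exists_sq_eq_and_crossingKernel_eq_re (B : ℝ) : ∃ k : ℂ, k ^ 2 = 16 * π ^ 2 * B ∧
    ∀ x : ℝ, crossingKernel B x = (Complex.cosh (k * x)).re := by
  refine ⟨4 * π * (√B + √(-B) * Complex.I), ?_, fun x => ?_⟩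
  · have hB : √B ^ 2 - √(-B) ^ 2 = B ∧ √B * √(-B) = 0 := by
      rcases le_total 0 B with h | h
      · simp [sqrt_eq_zero_of_nonpos (neg_nonpos.2 h), sq_sqrt h]
      · simp [sqrt_eq_zero_of_nonpos h, sq_sqrt (neg_nonneg.2 h)]
    have hdiff : (√B : ℂ) ^ 2 - √(-B) ^ 2 = B := by exact_mod_cast hB.1
    have hprod : (√B : ℂ) * √(-B) = 0 := by exact_mod_cast hB.2
    linear_combination 16 * (π : ℂ) ^ 2 * hdiff + 32 * (π : ℂ) ^ 2 * Complex.I * hprod +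
      16 * (π : ℂ) ^ 2 * (√(-B) : ℂ) ^ 2 * Complex.I_sq
  · have hk : 4 * π * (√B + √(-B) * Complex.I) * x =
        (4 * π * √B * x : ℝ) + (4 * π * √(-B) * x : ℝ) * Complex.I := by
      push_cast
      ring
    rw [hk, Complex.cosh_add, Complex.cosh_mul_I, Complex.sinh_mul_I, ← Complex.ofReal_cosh,
      ← Complex.ofReal_cos, ← Complex.ofReal_sinh, ← Complex.ofReal_sin, ← mul_assoc,
      ← Complex.ofReal_mul, ← Complex.ofReal_mul, Complex.add_re, Complex.ofReal_re,
      Complex.re_ofReal_mul, Complex.I_re, mul_zero, add_zero, crossingKernel]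

lemma gaussian_mul_re (β x : ℝ) (z : ℂ) :
    exp (-β * x ^ 2) * z.re = RCLike.re (Complex.exp (-β * x ^ 2) * z) := by
  have hexp : Complex.exp (-β * x ^ 2) = (exp (-β * x ^ 2) : ℝ) := by push_cast; rfl
  rw [hexp]
  exact (Complex.re_ofReal_mul _ _).symm

lemma integrable_gaussian_mul_crossingKernel {β : ℝ} (hβ : 0 < β) (B : ℝ) :
    Integrable fun x : ℝ => exp (-β * x ^ 2) * crossingKernel B x := by
  obtain ⟨k, -, hk⟩ := exists_sq_eq_and_crossingKernel_eq_re B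
  simp_rw [hk, gaussian_mul_re]
  exact (integrable_gaussian_mul_ccosh hβ k).re

lemma integral_gaussian_mul_crossingKernel {β : ℝ} (hβ : 0 < β) (B : ℝ) :
    ∫ x : ℝ, exp (-β * x ^ 2) * crossingKernel B x = √(π / β) * exp (4 * π ^ 2 * B / β) := by
  obtain ⟨k, hk_sq, hk⟩ := exists_sq_eq_and_crossingKernel_eq_re B
  simp_rw [hk, gaussian_mul_re]
  rw [integral_re (integrable_gaussian_mul_ccosh hβ k), integral_gaussian_mul_ccosh hβ, hk_sq]
  have hexponent : (16 * π ^ 2 * B / (4 * β) : ℂ) = (4 * π ^ 2 * B / β : ℝ) := by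
    push_cast
    ring
  rw [hexponent, ← Complex.ofReal_exp, ← Complex.ofReal_mul]
  exact Complex.ofReal_re _

/-- The density, in the variable `x = √(h - A)`, of the twists of large-spin states: the dual
of the left-moving vacuum character `e^{Aβ} (1 - e^{-β})`. -/
def vacuumDensity (A x : ℝ) : ℝ := crossingKernel A x - crossingKernel (A - 1) x

@[fun_prop]
lemma continuous_vacuumDensity (A : ℝ) : Continuous (vacuumDensity A) := by
  unfold vacuumDensity
  fun_prop

lemma vacuumDensity_nonneg {A : ℝ} (hA : 0 ≤ A) (x : ℝ) : 0 ≤ vacuumDensity A x := by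
  rw [vacuumDensity, sub_nonneg, crossingKernel_of_nonneg hA]
  refine (crossingKernel_le (A - 1) x).trans (cosh_le_cosh.2 ?_)
  simp_rw [abs_mul, abs_of_nonneg (sqrt_nonneg _)]
  gcongr
  linarith

lemma vacuumDensity_pos {A : ℝ} (hA : 0 < A) {x : ℝ} (hx : x ≠ 0) : 0 < vacuumDensity A x := by
  rw [vacuumDensity, sub_pos, crossingKernel_of_nonneg hA.le]
  refine (crossingKernel_le (A - 1) x).trans_lt (cosh_lt_cosh.2 ?_)
  simp_rw [abs_mul, abs_of_nonneg (sqrt_nonneg _)]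
  have hsqrt : √(A - 1) < √A := (sqrt_lt_sqrt_iff_of_pos hA).2 (sub_one_lt A)
  gcongr

/-- The limit of the twist distributions `ν J`, suitably normalised, as `J → ∞`. -/
def limitTwistMeasure (A : ℝ) : Measure ℝ :=
  (volume.withDensity fun x => ENNReal.ofReal (vacuumDensity A x)).map fun x => x ^ 2 + A

lemma ae_le_limitTwistMeasure (A : ℝ) : ∀ᵐ h ∂limitTwistMeasure A, A ≤ h := by
  rw [limitTwistMeasure, ae_map_iff (by fun_prop) measurableSet_Ici]
  exact .of_forall fun x => le_add_of_nonneg_left (sq_nonneg x)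

lemma vacuumDensity_smul_exp {A : ℝ} (hA : 0 ≤ A) (β x : ℝ) :
    (ENNReal.ofReal (vacuumDensity A x)).toReal • exp (-β * (x ^ 2 + A)) =
      exp (-(A * β)) * (exp (-β * x ^ 2) * crossingKernel A x -
        exp (-β * x ^ 2) * crossingKernel (A - 1) x) := by
  have hexp : exp (-β * (x ^ 2 + A)) = exp (-(A * β)) * exp (-β * x ^ 2) := by
    rw [← exp_add]
    ring_nf
  rw [ENNReal.toReal_ofReal (vacuumDensity_nonneg hA x), hexp, vacuumDensity, smul_eq_mul]
  ring

lemma integrable_exp_limitTwistMeasure {A β : ℝ} (hA : 0 ≤ A) (hβ : 0 < β) :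
    Integrable (fun h => exp (-β * h)) (limitTwistMeasure A) := by
  rw [limitTwistMeasure, integrable_map_measure (by fun_prop) (by fun_prop),
    integrable_withDensity_iff_integrable_smul' (by fun_prop) (by simp)]
  refine (((integrable_gaussian_mul_crossingKernel hβ A).sub
    (integrable_gaussian_mul_crossingKernel hβ (A - 1))).const_mul (exp (-(A * β)))).congr
    (.of_forall fun x => (vacuumDensity_smul_exp hA β x).symm)

lemma integral_exp_limitTwistMeasure {A β : ℝ} (hA : 0 ≤ A) (hβ : 0 < β) :
    ∫ h, exp (-β * h) ∂limitTwistMeasure A =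
      exp (-(A * β)) * √(π / β) * (exp (4 * π ^ 2 * A / β) * (1 - exp (-(4 * π ^ 2 / β)))) := by
  have hshift : exp (4 * π ^ 2 * (A - 1) / β) =
      exp (4 * π ^ 2 * A / β) * exp (-(4 * π ^ 2 / β)) := by
    rw [← exp_add]
    ring_nf
  rw [limitTwistMeasure, integral_map (by fun_prop) (by fun_prop),
    integral_withDensity_eq_integral_toReal_smul (by fun_prop) (by simp)]
  simp_rw [vacuumDensity_smul_exp hA]
  rw [integral_const_mul, integral_sub (integrable_gaussian_mul_crossingKernel hβ _)
    (integrable_gaussian_mul_crossingKernel hβ _), integral_gaussian_mul_crossingKernel hβ,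
    integral_gaussian_mul_crossingKernel hβ, hshift]
  ring

lemma limitTwistMeasure_Ioo_ne_zero {A a b : ℝ} (hA : 0 < A) (hab : a < b) (hAb : A < b) :
    limitTwistMeasure A (Set.Ioo a b) ≠ 0 := by
  have hopen : IsOpen ((fun x : ℝ => x ^ 2 + A) ⁻¹' Set.Ioo (max a A) b) :=
    isOpen_Ioo.preimage (by fun_prop)
  have hvol : volume ((fun x : ℝ => x ^ 2 + A) ⁻¹' Set.Ioo (max a A) b) ≠ 0 := by
    obtain ⟨h, hh⟩ := Set.nonempty_Ioo.2 (max_lt hab hAb)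
    refine (hopen.measure_pos volume ⟨√(h - A), ?_⟩).ne'
    simpa [sq_sqrt (sub_nonneg.2 ((le_max_right a A).trans hh.1.le))] using hh
  rw [limitTwistMeasure, Measure.map_apply (by fun_prop) measurableSet_Ioo, Ne,
    withDensity_apply_eq_zero (by fun_prop)]
  refine fun hzero => hvol (measure_mono_null (fun x hx => Set.mem_inter ?_ ?_) hzero)
  · have hx0 : x ≠ 0 := by
      rintro rfl
      simpa using (le_max_right a A).trans_lt hx.1
    simpa using vacuumDensity_pos hA hx0
  · exact ⟨(le_max_left a A).trans_lt hx.1, hx.2⟩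

end LimitMeasure

section Spectrum

variable {T : ℝ} {ν : ℤ → Measure ℝ}

/-- The contribution of the non-vacuum states of spin `J` at real inverse temperatures. -/
def spinPartition (ν : ℤ → Measure ℝ) (J : ℤ) (x y : ℝ) : ℝ :=
  ∫ h, exp (-x * h - y * (h + J)) ∂ν J

/-- The contribution of all non-vacuum states at real inverse temperatures. -/
def realNonvacuum (ν : ℤ → Measure ℝ) (x y : ℝ) : ℝ := ∑' J : ℤ, spinPartition ν J x y

/-- The contribution of all non-vacuum states at complex inverse temperatures. -/
def nonvacuum (ν : ℤ → Measure ℝ) (βL βR : ℂ) : ℂ :=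
  ∑' J : ℤ, ∫ h : ℝ, Complex.exp (-βL * h - βR * (h + J)) ∂ν J

lemma spinPartition_nonneg (ν : ℤ → Measure ℝ) (J : ℤ) (x y : ℝ) : 0 ≤ spinPartition ν J x y :=
  integral_nonneg fun _ => (exp_pos _).le

lemma realNonvacuum_nonneg (ν : ℤ → Measure ℝ) (x y : ℝ) : 0 ≤ realNonvacuum ν x y :=
  tsum_nonneg fun J => spinPartition_nonneg ν J x y

lemma nonvacuum_ofReal (ν : ℤ → Measure ℝ) (x y : ℝ) : nonvacuum ν x y = realNonvacuum ν x y := by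
  rw [nonvacuum, realNonvacuum, Complex.ofReal_tsum]
  refine tsum_congr fun J => ?_
  rw [spinPartition, ← integral_complex_ofReal]
  push_cast
  rfl

lemma spinPartition_sub (ν : ℤ → Measure ℝ) (J : ℤ) (β y : ℝ) :
    spinPartition ν J (β - y) y = exp (-(y * J)) * ∫ h, exp (-β * h) ∂ν J := by
  rw [spinPartition, ← integral_const_mul]
  refine integral_congr_ae (.of_forall fun h => ?_)
  beta_reduce
  rw [← exp_add]
  ring_nf

lemma nonvacuum_sub_sub_mul_I (ν : ℤ → Measure ℝ) (β ε s : ℝ) :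
    nonvacuum ν (β - (ε - s * Complex.I)) (ε - s * Complex.I) =
      ∑' J : ℤ, spinPartition ν J (β - ε) ε * Complex.exp (J * s * Complex.I) := by
  refine tsum_congr fun J => ?_
  rw [spinPartition, ← integral_complex_ofReal, ← integral_mul_const]
  refine integral_congr_ae (.of_forall fun h => ?_)
  beta_reduce
  rw [Complex.ofReal_exp, ← Complex.exp_add]
  push_cast
  ring_nf

namespace IsSpectrum

lemma ae_gt (hs : IsSpectrum T ν) (J : ℤ) : ∀ᵐ h ∂ν J, T < h ∧ T < h + J := by
  rw [ae_iff]
  exact hs.1 J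

lemma integrable_exp (hs : IsSpectrum T ν) (J : ℤ) {x y : ℝ} (hx : 0 < x) (hy : 0 < y) :
    Integrable (fun h => exp (-x * h - y * (h + J))) (ν J) := by
  refine ⟨by fun_prop, ?_⟩
  rw [hasFiniteIntegral_iff_ofReal (.of_forall fun h => (exp_pos _).le)]
  exact (ENNReal.le_tsum J).trans_lt (hs.2 x y hx hy)

lemma integrable_exp_neg (hs : IsSpectrum T ν) (J : ℤ) : Integrable (fun h => exp (-h)) (ν J) := by
  refine ((hs.integrable_exp J one_half_pos one_half_pos).const_mul (exp (J / 2))).congr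
    (.of_forall fun h => ?_)
  beta_reduce
  rw [← exp_add]
  ring_nf

lemma summable_spinPartition (hs : IsSpectrum T ν) {x y : ℝ} (hx : 0 < x) (hy : 0 < y) :
    Summable fun J : ℤ => spinPartition ν J x y := by
  refine (ENNReal.summable_toReal (hs.2 x y hx hy).ne).congr fun J => ?_
  rw [spinPartition, integral_eq_lintegral_of_nonneg_ae (.of_forall fun h => (exp_pos _).le)
    (by fun_prop)]

lemma norm_nonvacuum_le (hs : IsSpectrum T ν) {βL βR : ℂ} (hL : 0 < βL.re) (hR : 0 < βR.re) :
    ‖nonvacuum ν βL βR‖ ≤ realNonvacuum ν βL.re βR.re := by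
  refine tsum_of_norm_bounded (hs.summable_spinPartition hL hR).hasSum fun J => ?_
  refine (norm_integral_le_integral_norm _).trans_eq ?_
  simp [Complex.norm_exp, spinPartition]

lemma realNonvacuum_le_exp_mul (hs : IsSpectrum T ν) (hT : 0 ≤ T) {x y x₀ y₀ : ℝ}
    (hx₀ : 0 < x₀) (hy₀ : 0 < y₀) (hx : x₀ ≤ x) (hy : y₀ ≤ y) :
    realNonvacuum ν x y ≤ exp (-(T * (y - y₀))) * realNonvacuum ν x₀ y₀ := by
  rw [realNonvacuum, realNonvacuum, ← tsum_mul_left]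
  refine Summable.tsum_le_tsum (fun J => ?_)
    (hs.summable_spinPartition (hx₀.trans_le hx) (hy₀.trans_le hy))
    ((hs.summable_spinPartition hx₀ hy₀).mul_left _)
  rw [spinPartition, spinPartition, ← integral_const_mul]
  refine integral_mono_ae (hs.integrable_exp J (hx₀.trans_le hx) (hy₀.trans_le hy))
    ((hs.integrable_exp J hx₀ hy₀).const_mul _) ?_
  filter_upwards [hs.ae_gt J] with h hh
  rw [← exp_add, exp_le_exp]
  linarith [mul_nonneg (sub_nonneg.2 hx) (hT.trans hh.1.le),
    mul_nonneg (sub_nonneg.2 hy) (sub_nonneg.2 hh.2.le)]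

lemma realNonvacuum_anti (hs : IsSpectrum T ν) (hT : 0 ≤ T) {x y x₀ y₀ : ℝ}
    (hx₀ : 0 < x₀) (hy₀ : 0 < y₀) (hx : x₀ ≤ x) (hy : y₀ ≤ y) :
    realNonvacuum ν x y ≤ realNonvacuum ν x₀ y₀ := by
  refine (hs.realNonvacuum_le_exp_mul hT hx₀ hy₀ hx hy).trans
    (mul_le_of_le_one_left (realNonvacuum_nonneg ν x₀ y₀) (exp_le_one_iff.2 ?_))
  exact neg_nonpos.2 (mul_nonneg hT (sub_nonneg.2 hy))

end IsSpectrum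

end Spectrum

section SpinExtraction

lemma continuous_tsum_mul_cexp_int {c : ℤ → ℂ} (hc : Summable fun K => ‖c K‖) :
    Continuous fun s : ℝ => ∑' K : ℤ, c K * Complex.exp (K * s * Complex.I) := by
  refine continuous_tsum (fun K => by fun_prop) hc fun K s => ?_
  simp [Complex.norm_exp]

lemma integral_cexp_int_mul (n : ℤ) :
    ∫ s : ℝ in -π..π, Complex.exp (n * s * Complex.I) = if n = 0 then 2 * (π : ℂ) else 0 := by
  split_ifs with hn
  · simp [hn, ← two_mul]
  · have hc : (n : ℂ) * Complex.I ≠ 0 := mul_ne_zero (Int.cast_ne_zero.2 hn) Complex.I_ne_zero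
    have hperiod : Complex.exp (n * Complex.I * π) = Complex.exp (n * Complex.I * (-π : ℝ)) :=
      Complex.exp_eq_exp_iff_exists_int.2 ⟨n, by push_cast; ring⟩
    simp_rw [mul_right_comm _ _ Complex.I]
    rw [integral_exp_mul_complex hc, hperiod, sub_self, zero_div]

lemma integral_cexp_neg_int_mul_tsum {c : ℤ → ℂ} (hc : Summable fun K => ‖c K‖) (J : ℤ) :
    ∫ s : ℝ in -π..π, Complex.exp (-(J * s * Complex.I)) *
      ∑' K : ℤ, c K * Complex.exp (K * s * Complex.I) = 2 * π * c J := by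
  let f (K : ℤ) : C(ℝ, ℂ) := ⟨fun s => c K * Complex.exp ((K - J : ℤ) * s * Complex.I), by fun_prop⟩
  have hf_norm : Summable fun K =>
      ‖(f K).restrict (⟨Set.uIcc (-π) π, isCompact_uIcc⟩ : TopologicalSpace.Compacts ℝ)‖ := by
    refine hc.of_nonneg_of_le (fun _ => norm_nonneg _) fun K => ?_
    refine (ContinuousMap.norm_le _ (norm_nonneg _)).2 fun s => ?_
    simp [f, Complex.norm_exp]
  have hf_sum (s : ℝ) : Complex.exp (-(J * s * Complex.I)) *
      ∑' K : ℤ, c K * Complex.exp (K * s * Complex.I) = ∑' K, f K s := by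
    rw [← tsum_mul_left]
    refine tsum_congr fun K => ?_
    rw [mul_left_comm, ← Complex.exp_add]
    simp only [f, ContinuousMap.coe_mk]
    push_cast
    ring_nf
  have hf_int (K : ℤ) : ∫ s in -π..π, f K s = if K = J then 2 * π * c J else 0 := by
    simp only [f, ContinuousMap.coe_mk]
    rw [intervalIntegral.integral_const_mul, integral_cexp_int_mul]
    by_cases hKJ : K = J
    · simp [hKJ, mul_comm]
    · simp [hKJ, sub_eq_zero]
  simp_rw [hf_sum]
  rw [← (intervalIntegral.hasSum_intervalIntegral_of_summable_norm hf_norm).tsum_eq]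
  simp_rw [hf_int]
  exact tsum_ite_eq J _

namespace IsSpectrum

variable {T : ℝ} {ν : ℤ → Measure ℝ}

lemma summable_norm_spinPartition_sub (hs : IsSpectrum T ν) {β ε : ℝ} (hε : 0 < ε) (hεβ : ε < β) :
    Summable fun K : ℤ => ‖(spinPartition ν K (β - ε) ε : ℂ)‖ := by
  simp_rw [Complex.norm_of_nonneg (spinPartition_nonneg ν _ _ _)]
  exact hs.summable_spinPartition (sub_pos.2 hεβ) hε

lemma continuous_nonvacuum_sub (hs : IsSpectrum T ν) {β ε : ℝ} (hε : 0 < ε) (hεβ : ε < β) :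
    Continuous fun s : ℝ => nonvacuum ν (β - (ε - s * Complex.I)) (ε - s * Complex.I) := by
  simp_rw [nonvacuum_sub_sub_mul_I]
  exact continuous_tsum_mul_cexp_int (hs.summable_norm_spinPartition_sub hε hεβ)

lemma integral_cexp_mul_nonvacuum_sub (hs : IsSpectrum T ν) {β ε : ℝ} (hε : 0 < ε) (hεβ : ε < β)
    (J : ℤ) :
    ∫ s : ℝ in -π..π, Complex.exp (J * (ε - s * Complex.I)) *
      nonvacuum ν (β - (ε - s * Complex.I)) (ε - s * Complex.I) =
        2 * π * (∫ h, exp (-β * h) ∂ν J : ℝ) := by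
  have hexp (s : ℝ) : Complex.exp (J * (ε - s * Complex.I)) =
      exp (ε * J) * Complex.exp (-(J * s * Complex.I)) := by
    push_cast
    rw [← Complex.exp_add]
    ring_nf
  have hcancel : (exp (ε * J) : ℂ) * exp (-(ε * J)) = 1 := by
    rw [← Complex.ofReal_mul, ← exp_add, add_neg_cancel, exp_zero, Complex.ofReal_one]
  have hcoeff :=
    integral_cexp_neg_int_mul_tsum (hs.summable_norm_spinPartition_sub hε hεβ) J
  simp_rw [nonvacuum_sub_sub_mul_I, hexp, mul_assoc (exp (ε * J) : ℂ)]
  rw [intervalIntegral.integral_const_mul, hcoeff, spinPartition_sub, Complex.ofReal_mul]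
  linear_combination 2 * π * (∫ h, exp (-β * h) ∂ν J : ℝ) * hcancel

end IsSpectrum

end SpinExtraction

section DualChannel

/-- The modular image `4π²/z` of an inverse temperature `z`. -/
def dualTemp (z : ℂ) : ℂ := 4 * (π : ℂ) ^ 2 / z

lemma dualTemp_ofReal (x : ℝ) : dualTemp x = (4 * π ^ 2 / x : ℝ) := by
  rw [dualTemp]
  push_cast
  rfl

lemma norm_dualTemp (z : ℂ) : ‖dualTemp z‖ = 4 * π ^ 2 / ‖z‖ := by
  simp [dualTemp]

lemma re_dualTemp (z : ℂ) : (dualTemp z).re = 4 * π ^ 2 * z.re / ‖z‖ ^ 2 := by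
  have hcast : 4 * (π : ℂ) ^ 2 = (4 * π ^ 2 : ℝ) := by push_cast; rfl
  rw [dualTemp, hcast, Complex.div_re, Complex.ofReal_re, Complex.ofReal_im, Complex.sq_norm,
    zero_mul, zero_div, add_zero]

lemma re_dualTemp_pos {z : ℂ} (hz : 0 < z.re) : 0 < (dualTemp z).re := by
  have hnorm : 0 < ‖z‖ := hz.trans_le (Complex.re_le_norm z)
  rw [re_dualTemp]
  positivity

lemma re_dualTemp_le {z : ℂ} (hz : 0 < z.re) : (dualTemp z).re ≤ 4 * π ^ 2 / z.re := by
  calc (dualTemp z).re ≤ 4 * π ^ 2 * z.re / z.re ^ 2 := by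
        rw [re_dualTemp]
        gcongr
        exact Complex.re_le_norm z
    _ = 4 * π ^ 2 / z.re := by field_simp

lemma le_re_dualTemp {z : ℂ} (hz : 0 < z.re) {R : ℝ} (hR : ‖z‖ ≤ R) :
    4 * π ^ 2 * z.re / R ^ 2 ≤ (dualTemp z).re := by
  have hnorm : 0 < ‖z‖ := hz.trans_le (Complex.re_le_norm z)
  rw [re_dualTemp]
  gcongr

/-- The contribution of the vacuum module to the reduced partition function. -/
def vacuum (βL βR : ℂ) : ℂ := (1 - Complex.exp (-βL)) * (1 - Complex.exp (-βR))

lemma norm_one_sub_cexp_neg_le {z : ℂ} (hz : 0 ≤ z.re) : ‖1 - Complex.exp (-z)‖ ≤ 2 := by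
  calc ‖1 - Complex.exp (-z)‖ ≤ ‖(1 : ℂ)‖ + ‖Complex.exp (-z)‖ := norm_sub_le _ _
    _ ≤ 1 + 1 := by
        rw [norm_one, Complex.norm_exp, Complex.neg_re]
        gcongr
        exact exp_le_one_iff.2 (neg_nonpos.2 hz)
    _ = 2 := one_add_one_eq_two

lemma norm_vacuum_le {βL βR : ℂ} (hL : 0 ≤ βL.re) (hR : 0 ≤ βR.re) : ‖vacuum βL βR‖ ≤ 4 := by
  calc ‖vacuum βL βR‖ = ‖1 - Complex.exp (-βL)‖ * ‖1 - Complex.exp (-βR)‖ := norm_mul _ _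
    _ ≤ 2 * 2 := by
        gcongr
        exacts [norm_one_sub_cexp_neg_le hL, norm_one_sub_cexp_neg_le hR]
    _ = 4 := by norm_num

lemma norm_cpow_half (z : ℂ) : ‖z ^ ((1 : ℂ) / 2)‖ = √‖z‖ := by
  have hhalf : (1 : ℂ) / 2 = (1 / 2 : ℝ) := by push_cast; rfl
  rw [hhalf, Complex.norm_cpow_real, sqrt_eq_rpow]

/-- The prefactor relating the vacuum and non-vacuum contributions at `(βL, βR)` to those at the
dual temperatures, once `e^{A(βL + βR)}` is moved to the other side. -/
def crossingFactor (A : ℝ) (βL βR : ℂ) : ℂ :=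
  dualTemp (βL * βR) ^ ((1 : ℂ) / 2) * Complex.exp (A * (dualTemp βL + dualTemp βR))

lemma norm_crossingFactor_le {A : ℝ} (hA : 0 ≤ A) {βL βR : ℂ} (hL : 0 < βL.re) (hR : 0 < βR.re) :
    ‖crossingFactor A βL βR‖ ≤ √(4 * π ^ 2 / βL.re) * exp (A * (4 * π ^ 2 / βL.re)) *
      ((√βR.re)⁻¹ * exp (A * (dualTemp βR).re)) := by
  have hpref : √‖dualTemp (βL * βR)‖ ≤ √(4 * π ^ 2 / βL.re) * (√βR.re)⁻¹ := by
    rw [← sqrt_inv, ← sqrt_mul (by positivity), norm_dualTemp, norm_mul, ← div_eq_mul_inv,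
      div_div]
    gcongr
    exacts [Complex.re_le_norm βL, Complex.re_le_norm βR]
  have hexp : ‖Complex.exp (A * (dualTemp βL + dualTemp βR))‖ ≤
      exp (A * (4 * π ^ 2 / βL.re)) * exp (A * (dualTemp βR).re) := by
    rw [Complex.norm_exp, Complex.re_ofReal_mul, Complex.add_re, mul_add, exp_add]
    gcongr
    exact re_dualTemp_le hL
  calc ‖crossingFactor A βL βR‖
      = √‖dualTemp (βL * βR)‖ * ‖Complex.exp (A * (dualTemp βL + dualTemp βR))‖ := by
        rw [crossingFactor, norm_mul, norm_cpow_half]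
    _ ≤ √(4 * π ^ 2 / βL.re) * (√βR.re)⁻¹ *
        (exp (A * (4 * π ^ 2 / βL.re)) * exp (A * (dualTemp βR).re)) := by gcongr
    _ = _ := by ring

variable {A T β : ℝ} {ν : ℤ → Measure ℝ}

lemma ModularInvariant.cexp_mul_vacuum_add_nonvacuum (hm : ModularInvariant A ν) {βL βR : ℂ}
    (hL : 0 < βL.re) (hR : 0 < βR.re) :
    Complex.exp (A * (βL + βR)) * (vacuum βL βR + nonvacuum ν βL βR) =
      crossingFactor A βL βR * (vacuum (dualTemp βL) (dualTemp βR) +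
        nonvacuum ν (dualTemp βL) (dualTemp βR)) :=
  (hm βL βR hL hR).trans (mul_assoc _ _ _).symm

lemma IsSpectrum.norm_vacuum_add_nonvacuum_le (hs : IsSpectrum T ν) {βL βR : ℂ}
    (hL : 0 < βL.re) (hR : 0 < βR.re) :
    ‖vacuum βL βR + nonvacuum ν βL βR‖ ≤ 4 + realNonvacuum ν βL.re βR.re :=
  norm_add_le_of_le (norm_vacuum_le hL.le hR.le) (hs.norm_nonvacuum_le hL hR)

lemma realNonvacuum_le_norm (ν : ℤ → Measure ℝ) (hA : 0 ≤ A) {x y : ℝ} (hx : 0 ≤ x)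
    (hy : 0 ≤ y) : realNonvacuum ν x y ≤
      ‖Complex.exp (A * (x + y)) * (vacuum x y + nonvacuum ν x y)‖ := by
  have hreal : Complex.exp (A * (x + y)) * (vacuum x y + nonvacuum ν x y) =
      (exp (A * (x + y)) * ((1 - exp (-x)) * (1 - exp (-y)) + realNonvacuum ν x y) : ℝ) := by
    rw [nonvacuum_ofReal, vacuum]
    push_cast
    rfl
  have hvac : 0 ≤ (1 - exp (-x)) * (1 - exp (-y)) :=
    mul_nonneg (sub_nonneg.2 (exp_le_one_iff.2 (neg_nonpos.2 hx)))
      (sub_nonneg.2 (exp_le_one_iff.2 (neg_nonpos.2 hy)))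
  have hnv := realNonvacuum_nonneg ν x y
  rw [hreal, Complex.norm_of_nonneg (by positivity)]
  calc realNonvacuum ν x y ≤ (1 - exp (-x)) * (1 - exp (-y)) + realNonvacuum ν x y :=
        le_add_of_nonneg_left hvac
    _ ≤ _ := le_mul_of_one_le_left (by positivity) (one_le_exp (by positivity))

lemma exists_realNonvacuum_le_of_le_one (hA : 0 ≤ A) (hT : 0 ≤ T) (hs : IsSpectrum T ν)
    (hm : ModularInvariant A ν) {c : ℝ} (hc : 0 < c) :
    ∃ C, 0 ≤ C ∧ ∀ y : ℝ, 0 < y → y ≤ 1 →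
      realNonvacuum ν c y ≤ C * ((√y)⁻¹ * exp (A * (4 * π ^ 2 / y))) := by
  have hc' : 0 < 4 * π ^ 2 / c := by positivity
  have hpi : 1 ≤ 4 * π ^ 2 := by nlinarith [pi_gt_three]
  have hnv := realNonvacuum_nonneg ν (4 * π ^ 2 / c) 1
  refine ⟨√(4 * π ^ 2 / c) * exp (A * (4 * π ^ 2 / c)) * (4 + realNonvacuum ν (4 * π ^ 2 / c) 1),
    by positivity, fun y hy hy1 => ?_⟩
  have hy' : 1 ≤ 4 * π ^ 2 / y := (one_le_div hy).2 (hy1.trans hpi)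
  have hfactor := norm_crossingFactor_le hA (βL := c) (βR := y) hc hy
  have hdual := hs.norm_vacuum_add_nonvacuum_le (re_dualTemp_pos (z := c) hc)
    (re_dualTemp_pos (z := y) hy)
  simp only [dualTemp_ofReal, Complex.ofReal_re] at hfactor hdual
  calc realNonvacuum ν c y
      ≤ ‖Complex.exp (A * (c + y)) * (vacuum c y + nonvacuum ν c y)‖ :=
        realNonvacuum_le_norm ν hA hc.le hy.le
    _ = ‖crossingFactor A c y‖ * ‖vacuum (4 * π ^ 2 / c : ℝ) (4 * π ^ 2 / y : ℝ) +
          nonvacuum ν (4 * π ^ 2 / c : ℝ) (4 * π ^ 2 / y : ℝ)‖ := by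
        rw [hm.cexp_mul_vacuum_add_nonvacuum (by exact hc) (by exact hy), norm_mul,
          dualTemp_ofReal, dualTemp_ofReal]
    _ ≤ √(4 * π ^ 2 / c) * exp (A * (4 * π ^ 2 / c)) * ((√y)⁻¹ * exp (A * (4 * π ^ 2 / y))) *
          (4 + realNonvacuum ν (4 * π ^ 2 / c) 1) := by
        gcongr
        exact hdual.trans (by gcongr; exact hs.realNonvacuum_anti hT hc' one_pos le_rfl hy')
    _ = _ := mul_right_comm _ _ _

lemma exists_realNonvacuum_le (hA : 0 ≤ A) (hT : 0 ≤ T) (hs : IsSpectrum T ν)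
    (hm : ModularInvariant A ν) {c : ℝ} (hc : 0 < c) :
    ∃ C, 0 ≤ C ∧ ∀ x y : ℝ, c ≤ x → 0 < y →
      realNonvacuum ν x y ≤ C * ((1 + (√y)⁻¹) * exp (A * (4 * π ^ 2 / y))) := by
  obtain ⟨C, hC, hsmall⟩ := exists_realNonvacuum_le_of_le_one hA hT hs hm hc
  have hnv := realNonvacuum_nonneg ν c 1
  refine ⟨C + realNonvacuum ν c 1, by positivity, fun x y hx hy => ?_⟩
  rcases le_total y 1 with hy1 | hy1
  · calc realNonvacuum ν x y ≤ realNonvacuum ν c y := hs.realNonvacuum_anti hT hc hy hx le_rfl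
      _ ≤ C * ((√y)⁻¹ * exp (A * (4 * π ^ 2 / y))) := hsmall y hy hy1
      _ ≤ _ := by
        gcongr
        · exact le_add_of_nonneg_right hnv
        · exact le_add_of_nonneg_left zero_le_one
  · calc realNonvacuum ν x y ≤ realNonvacuum ν c 1 := hs.realNonvacuum_anti hT hc one_pos hx hy1
      _ ≤ C + realNonvacuum ν c 1 := le_add_of_nonneg_left hC
      _ ≤ _ := by
        refine le_mul_of_one_le_right (by positivity) (one_le_mul_of_one_le_of_one_le ?_ ?_)
        · exact le_add_of_nonneg_right (by positivity)
        · exact one_le_exp (by positivity)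

end DualChannel

section CircleMethod

variable {A T β : ℝ} {ν : ℤ → Measure ℝ} {w : ℂ}

/-- The right-moving inverse temperatures `w` at which the spin generating function
`w ↦ nonvacuum ν (β - w) w` is integrated; the left-moving one is `β - w`. -/
def arcStrip (β : ℝ) : Set ℂ := {w | 0 < w.re ∧ w.re ≤ 1 ∧ w.re ≤ β / 2 ∧ |w.im| ≤ π}

/-- The dual-channel contribution of the left-moving vacuum, cut off to the major arc
`|Im w| ≤ Re w`. -/
def majorArcTerm (A β : ℝ) (w : ℂ) : ℂ :=
  if |w.im| ≤ w.re then crossingFactor A (β - w) w * (1 - Complex.exp (-dualTemp (β - w))) else 0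

lemma half_le_re_sub (hwβ : w.re ≤ β / 2) : β / 2 ≤ (β - w).re := by
  rw [Complex.sub_re, Complex.ofReal_re]
  linarith

lemma exists_pos_le_re_dualTemp_sub (hβ : 0 < β) :
    ∃ c, 0 < c ∧ ∀ w ∈ arcStrip β, c ≤ (dualTemp (β - w)).re := by
  refine ⟨4 * π ^ 2 * (β / 2) / (β + π) ^ 2, by positivity, fun w ⟨hw, _, hwβ, him⟩ => ?_⟩
  have hre := half_le_re_sub hwβ
  have hnorm : ‖β - w‖ ≤ β + π := by
    refine (Complex.norm_le_abs_re_add_abs_im _).trans (add_le_add ?_ ?_)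
    · rw [abs_of_nonneg ((half_pos hβ).le.trans hre), Complex.sub_re, Complex.ofReal_re]
      linarith
    · simpa using him
  refine le_trans ?_ (le_re_dualTemp ((half_pos hβ).trans_le hre) hnorm)
  gcongr

lemma exists_norm_crossingFactor_sub_le (hA : 0 ≤ A) (hβ : 0 < β) :
    ∃ P, 0 ≤ P ∧ ∀ w ∈ arcStrip β,
      ‖crossingFactor A (β - w) w‖ ≤ P * ((√w.re)⁻¹ * exp (A * (dualTemp w).re)) := by
  refine ⟨√(4 * π ^ 2 / (β / 2)) * exp (A * (4 * π ^ 2 / (β / 2))), by positivity,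
    fun w ⟨hw, _, hwβ, _⟩ => ?_⟩
  have hre := half_le_re_sub hwβ
  refine (norm_crossingFactor_le hA ((half_pos hβ).trans_le hre) hw).trans ?_
  gcongr

lemma nonvacuum_sub_eq (hm : ModularInvariant A ν) (hβ : 0 < β) (hw : w ∈ arcStrip β) :
    nonvacuum ν (β - w) w = Complex.exp (-(A * β)) * (crossingFactor A (β - w) w *
      (vacuum (dualTemp (β - w)) (dualTemp w) + nonvacuum ν (dualTemp (β - w)) (dualTemp w))) -
        vacuum (β - w) w := by
  rw [← hm.cexp_mul_vacuum_add_nonvacuum ((half_pos hβ).trans_le (half_le_re_sub hw.2.2.1)) hw.1,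
    ← mul_assoc, ← Complex.exp_add, sub_add_cancel, neg_add_cancel, Complex.exp_zero, one_mul,
    add_sub_cancel_left]

lemma exists_norm_nonvacuum_sub_le (hA : 0 ≤ A) (hm : ModularInvariant A ν) (hβ : 0 < β) :
    ∃ P, 0 ≤ P ∧ ∀ w ∈ arcStrip β, ∀ W : ℂ,
      ‖nonvacuum ν (β - w) w - Complex.exp (-(A * β)) * (crossingFactor A (β - w) w * W)‖ ≤
        P * ((√w.re)⁻¹ * (exp (A * (dualTemp w).re) * ‖vacuum (dualTemp (β - w)) (dualTemp w) +
          nonvacuum ν (dualTemp (β - w)) (dualTemp w) - W‖)) + 4 := by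
  obtain ⟨P, hP, hfactor⟩ := exists_norm_crossingFactor_sub_le hA hβ
  refine ⟨P, hP, fun w hw W => ?_⟩
  have hL := (half_pos hβ).trans_le (half_le_re_sub hw.2.2.1)
  have hexp : ‖Complex.exp (-(A * β))‖ ≤ 1 := by
    rw [← Complex.ofReal_mul, ← Complex.ofReal_neg, Complex.norm_exp_ofReal]
    exact exp_le_one_iff.2 (neg_nonpos.2 (by positivity))
  rw [nonvacuum_sub_eq hm hβ hw, sub_right_comm, ← mul_sub, ← mul_sub]
  refine norm_sub_le_of_le ?_ (norm_vacuum_le hL.le hw.1.le)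
  rw [norm_mul, norm_mul]
  calc _ ≤ 1 * (P * ((√w.re)⁻¹ * exp (A * (dualTemp w).re)) * _) := by
        gcongr
        exact hfactor w hw
    _ = _ := by ring

lemma one_le_inv_mul_exp_div {ε a : ℝ} (hε : 0 < ε) (hε1 : ε ≤ 1) (ha : 0 ≤ a) :
    1 ≤ ε⁻¹ * exp (a / ε) :=
  one_le_mul_of_one_le_of_one_le ((one_le_inv₀ hε).2 hε1) (one_le_exp (by positivity))

lemma inv_sqrt_le_inv {ε : ℝ} (hε : 0 < ε) (hε1 : ε ≤ 1) : (√ε)⁻¹ ≤ ε⁻¹ :=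
  inv_anti₀ hε (le_sqrt_of_sq_le (by nlinarith))

lemma le_re_dualTemp_of_abs_im_le (hw : 0 < w.re) (him : |w.im| ≤ w.re) :
    2 * π ^ 2 / w.re ≤ (dualTemp w).re := by
  have hnorm : ‖w‖ ^ 2 ≤ 2 * w.re ^ 2 := by
    rw [Complex.sq_norm, Complex.normSq_apply]
    nlinarith [sq_le_sq' (neg_le_of_abs_le him) (le_of_abs_le him)]
  have hnorm_pos : 0 < ‖w‖ := hw.trans_le (Complex.re_le_norm w)
  calc 2 * π ^ 2 / w.re = 4 * π ^ 2 * w.re / (2 * w.re ^ 2) := by field_simp; norm_num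
    _ ≤ (dualTemp w).re := by
      rw [re_dualTemp]
      gcongr

lemma re_dualTemp_le_of_le_abs_im (hw : 0 < w.re) (him : w.re ≤ |w.im|) :
    (dualTemp w).re ≤ 2 * π ^ 2 / w.re := by
  have hnorm : 2 * w.re ^ 2 ≤ ‖w‖ ^ 2 := by
    rw [Complex.sq_norm, Complex.normSq_apply]
    nlinarith [sq_abs w.im, pow_le_pow_left₀ hw.le him 2]
  calc (dualTemp w).re ≤ 4 * π ^ 2 * w.re / (2 * w.re ^ 2) := by
        rw [re_dualTemp]
        gcongr
    _ = 2 * π ^ 2 / w.re := by field_simp; norm_num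

lemma IsSpectrum.norm_vacuum_add_nonvacuum_sub_le (hT : 0 ≤ T) (hs : IsSpectrum T ν) {c : ℝ}
    (hc : 0 < c) {βL βR : ℂ} (hL : c ≤ βL.re) (hR : 1 ≤ βR.re) :
    ‖vacuum βL βR + nonvacuum ν βL βR - (1 - Complex.exp (-βL))‖ ≤
      (2 + exp T * realNonvacuum ν c 1) * exp (-(min 1 T * βR.re)) := by
  have hL0 : 0 < βL.re := hc.trans_le hL
  have hR0 : 0 < βR.re := one_pos.trans_le hR
  have hnv := realNonvacuum_nonneg ν c 1
  have hvac : ‖(1 - Complex.exp (-βL)) * Complex.exp (-βR)‖ ≤ 2 * exp (-(min 1 T * βR.re)) := by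
    rw [norm_mul, Complex.norm_exp, Complex.neg_re]
    gcongr
    · exact norm_one_sub_cexp_neg_le hL0.le
    · exact mul_le_of_le_one_left hR0.le (min_le_left 1 T)
  have hnonvac : ‖nonvacuum ν βL βR‖ ≤
      exp T * realNonvacuum ν c 1 * exp (-(min 1 T * βR.re)) := by
    calc ‖nonvacuum ν βL βR‖ ≤ realNonvacuum ν βL.re βR.re := hs.norm_nonvacuum_le hL0 hR0
      _ ≤ exp (-(T * (βR.re - 1))) * realNonvacuum ν c 1 :=
        hs.realNonvacuum_le_exp_mul hT hc one_pos hL hR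
      _ = exp T * realNonvacuum ν c 1 * exp (-(T * βR.re)) := by
        rw [mul_right_comm, ← exp_add]
        ring_nf
      _ ≤ _ := by
        gcongr
        exact min_le_right 1 T
  rw [show vacuum βL βR + nonvacuum ν βL βR - (1 - Complex.exp (-βL)) =
    nonvacuum ν βL βR - (1 - Complex.exp (-βL)) * Complex.exp (-βR) by rw [vacuum]; ring]
  linarith [norm_sub_le_of_le hnonvac hvac]

lemma exp_mul_re_dualTemp_mul_exp_neg_le {m : ℝ} (hmA : m ≤ A) (hw : 0 < w.re) :
    exp (A * (dualTemp w).re) * exp (-(m * (dualTemp w).re)) ≤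
      exp (4 * π ^ 2 * (A - m) / w.re) := by
  rw [← exp_add, exp_le_exp]
  calc A * (dualTemp w).re + -(m * (dualTemp w).re) = (A - m) * (dualTemp w).re := by ring
    _ ≤ (A - m) * (4 * π ^ 2 / w.re) :=
      mul_le_mul_of_nonneg_left (re_dualTemp_le hw) (sub_nonneg.2 hmA)
    _ = 4 * π ^ 2 * (A - m) / w.re := by ring

lemma exists_norm_major_arc_error_le (hA : 0 ≤ A) (hT : 0 ≤ T) (hs : IsSpectrum T ν)
    (hm : ModularInvariant A ν) (hβ : 0 < β) :
    ∃ C, 0 ≤ C ∧ ∀ w ∈ arcStrip β, |w.im| ≤ w.re →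
      ‖nonvacuum ν (β - w) w - Complex.exp (-(A * β)) * (crossingFactor A (β - w) w *
        (1 - Complex.exp (-dualTemp (β - w))))‖ ≤
          C * (w.re⁻¹ * exp (4 * π ^ 2 * (A - min A (min 1 T)) / w.re)) := by
  obtain ⟨c, hc, hcw⟩ := exists_pos_le_re_dualTemp_sub hβ
  obtain ⟨P, hP, hcross⟩ := exists_norm_nonvacuum_sub_le hA hm hβ
  have hnv := realNonvacuum_nonneg ν c 1
  set Q := 2 + exp T * realNonvacuum ν c 1
  have hmA := min_le_left A (min 1 T)
  set m := min A (min 1 T)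
  refine ⟨P * Q + 4, by positivity, fun w hw him => ?_⟩
  have ⟨hw0, hw1, _, _⟩ := hw
  have hy := le_re_dualTemp_of_abs_im_le hw0 him
  have hy1 : 1 ≤ (dualTemp w).re :=
    ((one_le_div hw0).2 (by nlinarith [pi_gt_three])).trans hy
  calc _ ≤ P * ((√w.re)⁻¹ * (exp (A * (dualTemp w).re) * _)) + 4 := hcross w hw _
    _ ≤ P * (w.re⁻¹ * (exp (A * (dualTemp w).re) *
          (Q * exp (-(m * (dualTemp w).re))))) + 4 := by
        gcongr ?_ * (?_ * (_ * ?_)) + _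
        · exact inv_sqrt_le_inv hw0 hw1
        · refine (hs.norm_vacuum_add_nonvacuum_sub_le hT hc (hcw w hw) hy1).trans ?_
          gcongr
          exact min_le_right A _
    _ = P * Q * (w.re⁻¹ * (exp (A * (dualTemp w).re) *
          exp (-(m * (dualTemp w).re)))) + 4 * 1 := by ring
    _ ≤ P * Q * (w.re⁻¹ * exp (4 * π ^ 2 * (A - m) / w.re)) +
          4 * (w.re⁻¹ * exp (4 * π ^ 2 * (A - m) / w.re)) := by
        gcongr
        · exact exp_mul_re_dualTemp_mul_exp_neg_le hmA hw0
        · exact one_le_inv_mul_exp_div hw0 hw1 (mul_nonneg (by positivity) (sub_nonneg.2 hmA))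
    _ = _ := by ring

lemma re_le_re_dualTemp (hw : w ∈ arcStrip β) : w.re ≤ (dualTemp w).re := by
  obtain ⟨hw0, hw1, -, him⟩ := hw
  have hnorm_pos : 0 < ‖w‖ := hw0.trans_le (Complex.re_le_norm w)
  have hnorm : ‖w‖ ^ 2 ≤ 4 * π ^ 2 := by
    rw [Complex.sq_norm, Complex.normSq_apply]
    nlinarith [sq_abs w.im, pow_le_pow_left₀ (abs_nonneg _) him 2, pi_gt_three]
  rw [re_dualTemp, le_div_iff₀ (by positivity), mul_comm]
  gcongr

lemma re_dualTemp_add_le (hw : w ∈ arcStrip β) (him : w.re ≤ |w.im|) :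
    (dualTemp w).re + 4 * π ^ 2 / (dualTemp w).re ≤ 1 + 3 * π ^ 2 / w.re := by
  have hupper := re_dualTemp_le_of_le_abs_im hw.1 him
  obtain ⟨hw0, hw1, -, him'⟩ := hw
  have hnorm_pos : 0 < ‖w‖ := hw0.trans_le (Complex.re_le_norm w)
  have hdual : 4 * π ^ 2 / (dualTemp w).re ≤ w.re + π ^ 2 / w.re := by
    calc 4 * π ^ 2 / (dualTemp w).re = ‖w‖ ^ 2 / w.re := by rw [re_dualTemp]; field_simp
      _ = w.re + |w.im| ^ 2 / w.re := by
        rw [Complex.sq_norm, Complex.normSq_apply, sq_abs]; field_simp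
      _ ≤ w.re + π ^ 2 / w.re := by gcongr
  calc _ ≤ 2 * π ^ 2 / w.re + (1 + π ^ 2 / w.re) := by linarith
    _ = _ := by ring

lemma IsSpectrum.exists_norm_dual_le (hA : 0 ≤ A) (hT : 0 ≤ T) (hs : IsSpectrum T ν)
    (hm : ModularInvariant A ν) (hβ : 0 < β) :
    ∃ C, 0 ≤ C ∧ ∀ w ∈ arcStrip β,
      ‖vacuum (dualTemp (β - w)) (dualTemp w) + nonvacuum ν (dualTemp (β - w)) (dualTemp w)‖ ≤
        C * ((√w.re)⁻¹ * exp (A * (4 * π ^ 2 / (dualTemp w).re))) := by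
  obtain ⟨c, hc, hcw⟩ := exists_pos_le_re_dualTemp_sub hβ
  obtain ⟨C, hC, hbound⟩ := exists_realNonvacuum_le hA hT hs hm hc
  refine ⟨4 + 2 * C, by positivity, fun w hw => ?_⟩
  have hy := re_dualTemp_pos hw.1
  have hsqrt : (√(dualTemp w).re)⁻¹ ≤ (√w.re)⁻¹ :=
    inv_anti₀ (sqrt_pos.2 hw.1) (sqrt_le_sqrt (re_le_re_dualTemp hw))
  have hone : 1 ≤ (√w.re)⁻¹ := (one_le_inv₀ (sqrt_pos.2 hw.1)).2 (sqrt_le_one.2 hw.2.1)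
  set E := exp (A * (4 * π ^ 2 / (dualTemp w).re))
  have hE : 1 ≤ E := one_le_exp (by positivity)
  calc _ ≤ 4 + realNonvacuum ν _ (dualTemp w).re :=
        hs.norm_vacuum_add_nonvacuum_le (hc.trans_le (hcw w hw)) hy
    _ ≤ 4 * 1 + C * ((1 + (√(dualTemp w).re)⁻¹) * E) := by
        rw [mul_one]
        gcongr
        exact hbound _ _ (hcw w hw) hy
    _ ≤ 4 * ((√w.re)⁻¹ * E) + C * (((√w.re)⁻¹ + (√w.re)⁻¹) * E) := by
        gcongr
        exact one_le_mul_of_one_le_of_one_le hone hE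
    _ = _ := by ring

lemma exists_norm_minor_arc_le (hA : 0 ≤ A) (hT : 0 ≤ T) (hs : IsSpectrum T ν)
    (hm : ModularInvariant A ν) (hβ : 0 < β) :
    ∃ C, ∀ w ∈ arcStrip β, w.re ≤ |w.im| →
      ‖nonvacuum ν (β - w) w‖ ≤ C * (w.re⁻¹ * exp (3 * π ^ 2 * A / w.re)) := by
  obtain ⟨C, hC, hdual⟩ := hs.exists_norm_dual_le hA hT hm hβ
  obtain ⟨P, hP, hcross⟩ := exists_norm_nonvacuum_sub_le hA hm hβ
  refine ⟨P * C * exp A + 4, fun w hw him => ?_⟩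
  have hw0 := hw.1
  have hexp : exp (A * (dualTemp w).re) * exp (A * (4 * π ^ 2 / (dualTemp w).re)) ≤
      exp A * exp (3 * π ^ 2 * A / w.re) := by
    rw [← exp_add, ← exp_add, exp_le_exp]
    calc _ = A * ((dualTemp w).re + 4 * π ^ 2 / (dualTemp w).re) := by ring
      _ ≤ A * (1 + 3 * π ^ 2 / w.re) := mul_le_mul_of_nonneg_left (re_dualTemp_add_le hw him) hA
      _ = _ := by ring
  calc ‖nonvacuum ν (β - w) w‖ ≤ P * ((√w.re)⁻¹ * (exp (A * (dualTemp w).re) *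
          ‖vacuum (dualTemp (β - w)) (dualTemp w) +
            nonvacuum ν (dualTemp (β - w)) (dualTemp w)‖)) + 4 := by
        simpa only [mul_zero, sub_zero] using hcross w hw 0
    _ ≤ P * ((√w.re)⁻¹ * (exp (A * (dualTemp w).re) *
          (C * ((√w.re)⁻¹ * exp (A * (4 * π ^ 2 / (dualTemp w).re)))))) + 4 := by
        gcongr
        exact hdual w hw
    _ = P * C * (((√w.re)⁻¹ * (√w.re)⁻¹) * (exp (A * (dualTemp w).re) *
          exp (A * (4 * π ^ 2 / (dualTemp w).re)))) + 4 * 1 := by ring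
    _ ≤ P * C * (w.re⁻¹ * (exp A * exp (3 * π ^ 2 * A / w.re))) +
          4 * (w.re⁻¹ * exp (3 * π ^ 2 * A / w.re)) := by
        rw [← mul_inv, mul_self_sqrt hw0.le]
        gcongr
        exact one_le_inv_mul_exp_div hw0 hw.2.1 (by positivity)
    _ = _ := by ring

lemma exists_norm_nonvacuum_sub_majorArcTerm_le (hA : 0 < A) (hT : 0 < T) (hs : IsSpectrum T ν)
    (hm : ModularInvariant A ν) (hβ : 0 < β) :
    ∃ C δ : ℝ, 0 < δ ∧ ∀ w ∈ arcStrip β,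
      ‖nonvacuum ν (β - w) w - Complex.exp (-(A * β)) * majorArcTerm A β w‖ ≤
        C * (w.re⁻¹ * exp ((4 * π ^ 2 * A - δ) / w.re)) := by
  obtain ⟨C₁, hC₁, hmajor⟩ := exists_norm_major_arc_error_le hA.le hT.le hs hm hβ
  obtain ⟨C₂, hminor⟩ := exists_norm_minor_arc_le hA.le hT.le hs hm hβ
  have hmin : 0 < min A (min 1 T) := lt_min hA (lt_min one_pos hT)
  refine ⟨max C₁ C₂, π ^ 2 * min A (min 1 T), by positivity,
    fun w hw => ?_⟩
  have hw0 := hw.1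
  rw [majorArcTerm]
  split_ifs with him
  · refine (hmajor w hw him).trans ?_
    gcongr
    · exact le_max_left _ _
    · nlinarith [mul_pos (sq_pos_of_pos pi_pos) hmin]
  · rw [mul_zero, sub_zero]
    refine (hminor w hw (not_le.1 him).le).trans ?_
    gcongr
    · exact le_max_right _ _
    · nlinarith [mul_le_mul_of_nonneg_left (min_le_left A (min 1 T)) (sq_nonneg π)]

end CircleMethod

section SaddlePoint

variable {A β ε : ℝ}

lemma ofReal_mul_cpow_half {r : ℝ} (hr : 0 < r) {z : ℂ} (hz : z ≠ 0) :
    ((r : ℂ) * z) ^ ((1 : ℂ) / 2) = √r * z ^ ((1 : ℂ) / 2) := by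
  have hr' : (r : ℂ) ≠ 0 := Complex.ofReal_ne_zero.2 hr.ne'
  rw [Complex.cpow_def_of_ne_zero (mul_ne_zero hr' hz), Complex.log_ofReal_mul hr hz, add_mul,
    Complex.exp_add, ← Complex.cpow_def_of_ne_zero hz, sqrt_eq_rpow, Complex.ofReal_cpow hr.le,
    Complex.cpow_def_of_ne_zero hr', Complex.ofReal_log hr.le]
  push_cast
  rfl

lemma ofReal_cpow_half {r : ℝ} (hr : 0 < r) : (r : ℂ) ^ ((1 : ℂ) / 2) = √r := by
  simpa using ofReal_mul_cpow_half hr one_ne_zero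

/-- The part of the left-moving vacuum contribution at temperatures `(b, w)` that varies slowly
near the saddle point; the rapidly varying part is `e^{A·4π²/w}`. -/
def saddleAmplitude (A : ℝ) (b w : ℂ) : ℂ :=
  dualTemp (b * w) ^ ((1 : ℂ) / 2) *
    (Complex.exp (A * dualTemp b) * (1 - Complex.exp (-dualTemp b)))

lemma crossingFactor_mul_one_sub_cexp (A : ℝ) (b w : ℂ) :
    crossingFactor A b w * (1 - Complex.exp (-dualTemp b)) =
      Complex.exp (A * dualTemp w) * saddleAmplitude A b w := by
  rw [crossingFactor, saddleAmplitude, mul_add, Complex.exp_add]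
  ring

lemma saddleAmplitude_ofReal_mul (A : ℝ) (hε : 0 < ε) {b u : ℂ} (hb : b ≠ 0) (hu : u ≠ 0) :
    saddleAmplitude A b (ε * u) = (√ε)⁻¹ * saddleAmplitude A b u := by
  have hdual : dualTemp (b * (ε * u)) = (ε⁻¹ : ℝ) * dualTemp (b * u) := by
    rw [dualTemp, dualTemp, Complex.ofReal_inv, ← div_eq_inv_mul, div_div]
    ring
  have hne : dualTemp (b * u) ≠ 0 := by
    rw [dualTemp]
    exact div_ne_zero (by simp) (mul_ne_zero hb hu)
  rw [saddleAmplitude, hdual, ofReal_mul_cpow_half (inv_pos.2 hε) hne, sqrt_inv,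
    Complex.ofReal_inv, mul_assoc, saddleAmplitude]

lemma norm_saddleAmplitude_le (hA : 0 ≤ A) (hβ : 0 < β) {b u : ℂ} (hb : β ≤ b.re)
    (hu : 1 ≤ u.re) :
    ‖saddleAmplitude A b u‖ ≤ √(4 * π ^ 2 / β) * (exp (A * (4 * π ^ 2 / β)) * 2) := by
  have hb0 : 0 < b.re := hβ.trans_le hb
  rw [saddleAmplitude, norm_mul, norm_mul, norm_cpow_half, norm_dualTemp, norm_mul,
    Complex.norm_exp, Complex.re_ofReal_mul]
  gcongr
  · calc β = β * 1 := (mul_one β).symm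
      _ ≤ ‖b‖ * ‖u‖ := by
        gcongr
        exacts [hb.trans (Complex.re_le_norm b), hu.trans (Complex.re_le_norm u)]
  · exact (re_dualTemp_le hb0).trans (by gcongr)
  · exact norm_one_sub_cexp_neg_le (re_dualTemp_pos hb0).le

lemma saddleAmplitude_ofReal_one (A : ℝ) (hβ : 0 < β) :
    saddleAmplitude A β 1 = (√(4 * π ^ 2 / β) *
      (exp (4 * π ^ 2 * A / β) * (1 - exp (-(4 * π ^ 2 / β)))) : ℝ) := by
  rw [saddleAmplitude, mul_one, dualTemp_ofReal, ofReal_cpow_half (by positivity),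
    show 4 * π ^ 2 * A / β = A * (4 * π ^ 2 / β) by ring]
  push_cast
  rfl

/-- The point `u` of the rescaled contour, on which the right-moving inverse temperature is `εu`;
the saddle sits at `u = 1` and has width `√ε`. -/
def saddleContour (ε v : ℝ) : ℂ := 1 - (√ε * v : ℝ) * Complex.I

lemma re_saddleContour (ε v : ℝ) : (saddleContour ε v).re = 1 := by simp [saddleContour]

lemma im_saddleContour (ε v : ℝ) : (saddleContour ε v).im = -(√ε * v) := by simp [saddleContour]

lemma saddleContour_ne_zero (ε v : ℝ) : saddleContour ε v ≠ 0 :=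
  fun h => zero_ne_one (α := ℝ) (by rw [← re_saddleContour ε v, h, Complex.zero_re])

lemma saddleContour_zero (v : ℝ) : saddleContour 0 v = 1 := by simp [saddleContour]

lemma continuous_saddleContour : Continuous fun p : ℝ × ℝ => saddleContour p.1 p.2 := by
  unfold saddleContour
  fun_prop

lemma half_le_re_sub_mul_saddleContour (hεβ : ε ≤ β / 2) (v : ℝ) :
    β / 2 ≤ (β - ε * saddleContour ε v).re :=
  half_le_re_sub (by rwa [Complex.re_ofReal_mul, re_saddleContour, mul_one])

/-- The integrand on the major arc, after rescaling the contour to the width of the saddle and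
removing the value of the exponential there. -/
def saddleIntegrand (A β ε v : ℝ) : ℂ :=
  if |√ε * v| ≤ 1 then
    Complex.exp ((-(4 * π ^ 2 * A) * v ^ 2 : ℝ) / saddleContour ε v) *
      saddleAmplitude A (β - ε * saddleContour ε v) (saddleContour ε v)
  else 0

lemma norm_cexp_div_saddleContour_le (hA : 0 ≤ A) {v : ℝ} (hv : |√ε * v| ≤ 1) :
    ‖Complex.exp ((-(4 * π ^ 2 * A) * v ^ 2 : ℝ) / saddleContour ε v)‖ ≤
      exp (-(2 * π ^ 2 * A) * v ^ 2) := by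
  have hv2 : (√ε * v) ^ 2 ≤ 1 := (sq_le_one_iff_abs_le_one _).2 hv
  rw [Complex.norm_exp, exp_le_exp, Complex.div_re, Complex.ofReal_re, Complex.ofReal_im,
    Complex.normSq_apply, re_saddleContour, im_saddleContour, zero_mul, zero_div, add_zero,
    div_le_iff₀ (by nlinarith [sq_nonneg (√ε * v)])]
  nlinarith [mul_le_mul_of_nonneg_left hv2 (show 0 ≤ 2 * π ^ 2 * A * v ^ 2 by positivity)]

lemma norm_saddleIntegrand_le (hA : 0 ≤ A) (hβ : 0 < β) (hεβ : ε ≤ β / 2) (v : ℝ) :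
    ‖saddleIntegrand A β ε v‖ ≤ exp (-(2 * π ^ 2 * A) * v ^ 2) *
      (√(4 * π ^ 2 / (β / 2)) * (exp (A * (4 * π ^ 2 / (β / 2))) * 2)) := by
  rw [saddleIntegrand]
  split_ifs with hv
  · rw [norm_mul]
    gcongr
    · exact norm_cexp_div_saddleContour_le hA hv
    · exact norm_saddleAmplitude_le hA (half_pos hβ) (half_le_re_sub_mul_saddleContour hεβ v)
        (re_saddleContour ε v).ge
  · rw [norm_zero]
    positivity

lemma measurable_saddleIntegrand (A β ε : ℝ) : Measurable (saddleIntegrand A β ε) := by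
  have hu : Measurable (saddleContour ε) :=
    (continuous_saddleContour.comp (Continuous.prodMk_right ε)).measurable
  refine Measurable.ite (measurableSet_le (by fun_prop) (by fun_prop)) ?_ measurable_const
  unfold saddleAmplitude dualTemp
  fun_prop

lemma integrable_saddleIntegrand (hA : 0 < A) (hβ : 0 < β) (hεβ : ε ≤ β / 2) :
    Integrable (saddleIntegrand A β ε) :=
  ((integrable_exp_neg_mul_sq (by positivity)).mul_const _).mono'
    (measurable_saddleIntegrand A β ε).aestronglyMeasurable
    (.of_forall (norm_saddleIntegrand_le hA.le hβ hεβ))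

lemma continuousAt_saddleAmplitude (A : ℝ) {b u : ℂ} (hb : b ≠ 0)
    (hbu : dualTemp (b * u) ∈ Complex.slitPlane) :
    ContinuousAt (fun p : ℂ × ℂ => saddleAmplitude A p.1 p.2) (b, u) := by
  have hbu0 : b * u ≠ 0 := fun h => by simp [dualTemp, h] at hbu
  have hdual : ContinuousAt (fun p : ℂ × ℂ => dualTemp p.1) (b, u) :=
    continuousAt_const.div continuousAt_fst hb
  have hdual_mul : ContinuousAt (fun p : ℂ × ℂ => dualTemp (p.1 * p.2)) (b, u) :=
    continuousAt_const.div (continuousAt_fst.mul continuousAt_snd) hbu0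
  exact (hdual_mul.cpow continuousAt_const hbu).mul
    ((continuousAt_const.mul hdual).cexp.mul (continuousAt_const.sub hdual.neg.cexp))

lemma tendsto_saddleIntegrand (A : ℝ) (hβ : 0 < β) (v : ℝ) :
    Tendsto (fun ε => saddleIntegrand A β ε v) (𝓝 0)
      (𝓝 (exp (-(4 * π ^ 2 * A) * v ^ 2) * saddleAmplitude A β 1)) := by
  have hu : Tendsto (fun ε => saddleContour ε v) (𝓝 0) (𝓝 1) := by
    rw [← saddleContour_zero v]
    exact (continuous_saddleContour.comp (Continuous.prodMk_left v)).tendsto 0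
  have hb : Tendsto (fun ε : ℝ => (β : ℂ) - ε * saddleContour ε v) (𝓝 0) (𝓝 β) := by
    simpa using ((Complex.continuous_ofReal.tendsto 0).mul hu).const_sub (β : ℂ)
  have hslit : dualTemp ((β : ℂ) * 1) ∈ Complex.slitPlane := by
    rw [mul_one, dualTemp_ofReal, Complex.ofReal_mem_slitPlane]
    positivity
  have hamp := (continuousAt_saddleAmplitude A (Complex.ofReal_ne_zero.2 hβ.ne') hslit).tendsto.comp
    (hb.prodMk_nhds hu)
  have hgauss := (tendsto_const_nhds (x := ((-(4 * π ^ 2 * A) * v ^ 2 : ℝ) : ℂ))).div hu one_ne_zero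
  rw [div_one] at hgauss
  have hcut : ∀ᶠ ε : ℝ in 𝓝 0, |√ε * v| < 1 :=
    Continuous.tendsto' (by fun_prop) 0 0 (by simp) |>.eventually_lt_const one_pos
  rw [Complex.ofReal_exp]
  refine (hgauss.cexp.mul hamp).congr' ?_
  filter_upwards [hcut] with ε hε
  rw [saddleIntegrand, if_pos hε.le]
  rfl

lemma tendsto_integral_saddleIntegrand (hA : 0 < A) (hβ : 0 < β) :
    Tendsto (fun ε => ∫ v, saddleIntegrand A β ε v) (𝓝 0)
      (𝓝 (√(π / (4 * π ^ 2 * A)) * saddleAmplitude A β 1)) := by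
  have hgauss : (√(π / (4 * π ^ 2 * A)) * saddleAmplitude A β 1 : ℂ) =
      ∫ v : ℝ, exp (-(4 * π ^ 2 * A) * v ^ 2) * saddleAmplitude A β 1 := by
    rw [integral_mul_const, integral_complex_ofReal, integral_gaussian]
  rw [hgauss]
  refine tendsto_integral_filter_of_dominated_convergence
    (fun v => exp (-(2 * π ^ 2 * A) * v ^ 2) *
      (√(4 * π ^ 2 / (β / 2)) * (exp (A * (4 * π ^ 2 / (β / 2))) * 2)))
    (.of_forall fun ε => (measurable_saddleIntegrand A β ε).aestronglyMeasurable) ?_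
    ((integrable_exp_neg_mul_sq (by positivity)).mul_const _)
    (.of_forall (tendsto_saddleIntegrand A hβ))
  filter_upwards [Iic_mem_nhds (half_pos hβ)] with ε hεβ
  exact .of_forall (norm_saddleIntegrand_le hA.le hβ hεβ)

lemma ofReal_mul_saddleContour (ε v : ℝ) :
    ε * saddleContour ε v = ε - (ε * √ε * v : ℝ) * Complex.I := by
  rw [saddleContour]
  push_cast
  ring

/- With `u = saddleContour ε v` this is `u + u⁻¹ = 2 + (1 - u)² / u` and `(1 - u)² = -ε v²`. -/
lemma cexp_mul_cexp_dualTemp_saddleContour (hε : 0 < ε) {J : ℤ} (hJ : J * ε ^ 2 = 4 * π ^ 2 * A)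
    (v : ℝ) :
    Complex.exp (J * (ε * saddleContour ε v)) *
        Complex.exp (A * dualTemp (ε * saddleContour ε v)) =
      exp (8 * π ^ 2 * A / ε) *
        Complex.exp ((-(4 * π ^ 2 * A) * v ^ 2 : ℝ) / saddleContour ε v) := by
  have hε' : (ε : ℂ) ≠ 0 := Complex.ofReal_ne_zero.2 hε.ne'
  have hu := saddleContour_ne_zero ε v
  have hsq : (ε : ℂ) * v ^ 2 = -(1 - saddleContour ε v) ^ 2 := by
    have hsqrt : ((√ε : ℝ) : ℂ) ^ 2 = ε := by rw [← Complex.ofReal_pow, sq_sqrt hε.le]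
    rw [saddleContour, sub_sub_cancel, mul_pow, Complex.I_sq, Complex.ofReal_mul, mul_pow, hsqrt]
    ring
  have hJ' : (J : ℂ) * ε ^ 2 = 4 * π ^ 2 * A := by exact_mod_cast hJ
  rw [Complex.ofReal_exp, ← Complex.exp_add, ← Complex.exp_add, dualTemp]
  congr 1
  push_cast
  field_simp
  linear_combination saddleContour ε v ^ 2 * hJ' + 4 * (π : ℂ) ^ 2 * A * hsq

lemma cexp_mul_majorArcTerm (hβ : 0 < β) (hε : 0 < ε) (hεβ : ε ≤ β / 2) {J : ℤ}
    (hJ : J * ε ^ 2 = 4 * π ^ 2 * A) (v : ℝ) :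
    Complex.exp (J * (ε * saddleContour ε v)) * majorArcTerm A β (ε * saddleContour ε v) =
      ((√ε)⁻¹ * exp (8 * π ^ 2 * A / ε) : ℝ) * saddleIntegrand A β ε v := by
  have hcut : |(ε * saddleContour ε v).im| ≤ (ε * saddleContour ε v).re ↔ |√ε * v| ≤ 1 := by
    rw [Complex.im_ofReal_mul, Complex.re_ofReal_mul, re_saddleContour, im_saddleContour, abs_mul,
      abs_neg, abs_of_pos hε, mul_le_mul_iff_right₀ hε]
  have hb : (β - ε * saddleContour ε v : ℂ) ≠ 0 := fun h =>
    ((half_pos hβ).trans_le (half_le_re_sub_mul_saddleContour hεβ v)).ne' (by simp [h])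
  rw [majorArcTerm, saddleIntegrand]
  by_cases hv : |√ε * v| ≤ 1
  · rw [if_pos hv, if_pos (hcut.2 hv), crossingFactor_mul_one_sub_cexp, ← mul_assoc,
      cexp_mul_cexp_dualTemp_saddleContour hε hJ,
      saddleAmplitude_ofReal_mul A hε hb (saddleContour_ne_zero ε v)]
    push_cast
    ring
  · rw [if_neg hv, if_neg (hcut.not.2 hv), mul_zero, mul_zero]

lemma cexp_mul_majorArcTerm_line (hβ : 0 < β) (hε : 0 < ε) (hεβ : ε ≤ β / 2) {J : ℤ}
    (hJ : J * ε ^ 2 = 4 * π ^ 2 * A) :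
    (fun s : ℝ => Complex.exp (J * (ε - s * Complex.I)) *
        majorArcTerm A β (ε - s * Complex.I)) =
      fun s => ((√ε)⁻¹ * exp (8 * π ^ 2 * A / ε) : ℝ) *
        saddleIntegrand A β ε ((ε * √ε)⁻¹ * s) := by
  funext s
  rw [← cexp_mul_majorArcTerm hβ hε hεβ hJ, ofReal_mul_saddleContour,
    mul_inv_cancel_left₀ (by positivity)]

lemma integrable_cexp_mul_majorArcTerm (hA : 0 < A) (hβ : 0 < β) (hε : 0 < ε) (hεβ : ε ≤ β / 2)
    {J : ℤ} (hJ : J * ε ^ 2 = 4 * π ^ 2 * A) :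
    Integrable fun s : ℝ => Complex.exp (J * (ε - s * Complex.I)) *
      majorArcTerm A β (ε - s * Complex.I) := by
  rw [cexp_mul_majorArcTerm_line hβ hε hεβ hJ]
  exact ((integrable_saddleIntegrand hA hβ hεβ).const_mul _).comp_mul_left'
    (inv_ne_zero (by positivity))

lemma integral_cexp_mul_majorArcTerm (hβ : 0 < β) (hε : 0 < ε) (hε1 : ε ≤ 1) (hεβ : ε ≤ β / 2)
    {J : ℤ} (hJ : J * ε ^ 2 = 4 * π ^ 2 * A) :
    ∫ s : ℝ in -π..π, Complex.exp (J * (ε - s * Complex.I)) *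
        majorArcTerm A β (ε - s * Complex.I) =
      (ε * exp (8 * π ^ 2 * A / ε) : ℝ) * ∫ v, saddleIntegrand A β ε v := by
  rw [intervalIntegral.integral_eq_integral_of_support_subset]
  · rw [cexp_mul_majorArcTerm_line hβ hε hεβ hJ, integral_const_mul,
      Measure.integral_comp_mul_left, inv_inv, abs_of_pos (by positivity), Complex.real_smul,
      ← mul_assoc, ← Complex.ofReal_mul]
    congr 2
    field_simp
  · intro s hs
    have hsε : |s| ≤ ε := by
      by_contra hcon
      exact hs (by simp [majorArcTerm, hcon])
    have hπ := pi_gt_three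
    exact ⟨by linarith [neg_le_of_abs_le hsε], by linarith [le_of_abs_le hsε]⟩

end SaddlePoint

section CardyGrowth

variable {A T β ε C δ : ℝ} {ν : ℤ → Measure ℝ}

lemma sub_mul_I_mem_arcStrip (hε : 0 < ε) (hε1 : ε ≤ 1) (hεβ : ε ≤ β / 2) {s : ℝ}
    (hs : |s| ≤ π) : (ε - s * Complex.I : ℂ) ∈ arcStrip β := by
  simpa [arcStrip] using ⟨hε, hε1, hεβ, hs⟩

lemma IsSpectrum.norm_laplace_sub_le (hs : IsSpectrum T ν) (hA : 0 < A) (hβ : 0 < β) (hε : 0 < ε)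
    (hε1 : ε ≤ 1) (hεβ : ε ≤ β / 2) {J : ℤ} (hJ : J * ε ^ 2 = 4 * π ^ 2 * A)
    (herr : ∀ w ∈ arcStrip β,
      ‖nonvacuum ν (β - w) w - Complex.exp (-(A * β)) * majorArcTerm A β w‖ ≤
        C * (w.re⁻¹ * exp ((4 * π ^ 2 * A - δ) / w.re))) :
    ‖2 * π * (∫ h, exp (-β * h) ∂ν J : ℝ) - Complex.exp (-(A * β)) *
        ((ε * exp (8 * π ^ 2 * A / ε) : ℝ) * ∫ v, saddleIntegrand A β ε v)‖ ≤
      2 * π * C * (ε⁻¹ * exp ((8 * π ^ 2 * A - δ) / ε)) := by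
  have hεβ' : ε < β := by linarith
  have hεJ : J * ε = 4 * π ^ 2 * A / ε := by
    rw [eq_div_iff hε.ne', ← hJ]
    ring
  have hcont : Continuous fun s : ℝ => Complex.exp (J * (ε - s * Complex.I)) *
      nonvacuum ν (β - (ε - s * Complex.I)) (ε - s * Complex.I) :=
    Continuous.mul (by fun_prop) (hs.continuous_nonvacuum_sub hε hεβ')
  rw [← hs.integral_cexp_mul_nonvacuum_sub hε hεβ' J,
    ← integral_cexp_mul_majorArcTerm hβ hε hε1 hεβ hJ, ← intervalIntegral.integral_const_mul,
    ← intervalIntegral.integral_sub (hcont.intervalIntegrable _ _)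
      ((integrable_cexp_mul_majorArcTerm hA hβ hε hεβ hJ).intervalIntegrable.const_mul _)]
  refine (intervalIntegral.norm_integral_le_of_norm_le_const
    (C := exp (J * ε) * (C * (ε⁻¹ * exp ((4 * π ^ 2 * A - δ) / ε)))) fun s hs' => ?_).trans_eq ?_
  · rw [Set.uIoc_of_le (by linarith [pi_pos])] at hs'
    have hw := sub_mul_I_mem_arcStrip hε hε1 hεβ (abs_le.2 ⟨hs'.1.le, hs'.2⟩)
    have hbound := herr _ hw
    have hphase : ‖Complex.exp (J * (ε - s * Complex.I))‖ = exp (J * ε) := by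
      simp [Complex.norm_exp]
    rw [mul_left_comm, ← mul_sub, norm_mul, hphase]
    gcongr
    simpa using hbound
  · rw [hεJ, abs_of_pos (by linarith [pi_pos]),
      show (8 * π ^ 2 * A - δ) / ε = 4 * π ^ 2 * A / ε + (4 * π ^ 2 * A - δ) / ε by ring, exp_add]
    ring

lemma exists_norm_laplace_div_sub_le (hA : 0 < A) (hT : 0 < T) (hs : IsSpectrum T ν)
    (hm : ModularInvariant A ν) (hβ : 0 < β) :
    ∃ C δ : ℝ, 0 < δ ∧ ∀ ε, 0 < ε → ε ≤ 1 → ε ≤ β / 2 → ∀ J : ℤ, J * ε ^ 2 = 4 * π ^ 2 * A →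
      ‖((2 * π * (∫ h, exp (-β * h) ∂ν J) / (ε * exp (8 * π ^ 2 * A / ε)) : ℝ) : ℂ) -
          Complex.exp (-(A * β)) * ∫ v, saddleIntegrand A β ε v‖ ≤
        C * (ε⁻¹ ^ (2 : ℝ) * exp (-δ * ε⁻¹)) := by
  obtain ⟨C, δ, hδ, herr⟩ := exists_norm_nonvacuum_sub_majorArcTerm_le hA hT hs hm hβ
  refine ⟨2 * π * C, δ, hδ, fun ε hε hε1 hεβ J hJ => ?_⟩
  have hbound := hs.norm_laplace_sub_le hA hβ hε hε1 hεβ hJ herr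
  set L := ∫ h, exp (-β * h) ∂ν J
  set I := ∫ v, saddleIntegrand A β ε v
  have hD : 0 < ε * exp (8 * π ^ 2 * A / ε) := by positivity
  have hfactor : ((2 * π * L / (ε * exp (8 * π ^ 2 * A / ε)) : ℝ) : ℂ) -
      Complex.exp (-(A * β)) * I = (2 * π * L - Complex.exp (-(A * β)) *
        ((ε * exp (8 * π ^ 2 * A / ε) : ℝ) * I)) / (ε * exp (8 * π ^ 2 * A / ε) : ℝ) := by
    rw [sub_div, mul_left_comm, mul_div_cancel_left₀ _ (Complex.ofReal_ne_zero.2 hD.ne')]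
    push_cast
    rfl
  rw [hfactor, norm_div, Complex.norm_of_nonneg hD.le, div_le_iff₀ hD]
  refine hbound.trans_eq ?_
  rw [show (8 * π ^ 2 * A - δ) / ε = -δ * ε⁻¹ + 8 * π ^ 2 * A / ε by ring, exp_add, rpow_two]
  field_simp

/-- The growth rate in the spin `J` of the twist density of `ν J`. -/
def cardyGrowth (A : ℝ) (J : ℤ) : ℝ := exp (4 * π * √(A * J)) / √J

/-- The real part at which the contour crosses the saddle of `J w + 4π²A / w`. -/
def saddleTemp (A : ℝ) (J : ℤ) : ℝ := 2 * π * √(A / J)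

lemma saddleTemp_pos (hA : 0 < A) {J : ℤ} (hJ : 0 < J) : 0 < saddleTemp A J := by
  have : (0 : ℝ) < J := Int.cast_pos.2 hJ
  rw [saddleTemp]
  positivity

lemma mul_saddleTemp_sq (hA : 0 ≤ A) {J : ℤ} (hJ : 0 < J) :
    J * saddleTemp A J ^ 2 = 4 * π ^ 2 * A := by
  have : (0 : ℝ) < J := Int.cast_pos.2 hJ
  calc J * saddleTemp A J ^ 2 = J * (2 ^ 2 * π ^ 2 * (A / J)) := by
        rw [saddleTemp, mul_pow, mul_pow, sq_sqrt (by positivity)]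
    _ = 4 * π ^ 2 * A := by
        field_simp
        ring

lemma saddleTemp_mul_exp (hA : 0 < A) {J : ℤ} (hJ : 0 < J) :
    saddleTemp A J * exp (8 * π ^ 2 * A / saddleTemp A J) = 2 * π * √A * cardyGrowth A J := by
  have : (0 : ℝ) < J := Int.cast_pos.2 hJ
  have hexp : 8 * π ^ 2 * A / saddleTemp A J = 4 * π * √(A * J) := by
    rw [div_eq_iff (saddleTemp_pos hA hJ).ne', saddleTemp, sqrt_mul hA.le, sqrt_div hA.le]
    field_simp
    rw [sq_sqrt hA.le]
    ring
  rw [hexp, saddleTemp, cardyGrowth, sqrt_div hA.le]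
  ring

lemma tendsto_saddleTemp (A : ℝ) : Tendsto (saddleTemp A) atTop (𝓝 0) := by
  have hdiv : Tendsto (fun J : ℤ => A / (J : ℝ)) atTop (𝓝 0) :=
    tendsto_const_nhds.div_atTop tendsto_intCast_atTop_atTop
  have hsaddle := hdiv.sqrt.const_mul (2 * π)
  rwa [sqrt_zero, mul_zero] at hsaddle

lemma tendsto_cardyGrowth_atTop (hA : 0 < A) : Tendsto (cardyGrowth A) atTop atTop := by
  have hsqrt : Tendsto (fun J : ℤ => √(J : ℝ)) atTop atTop :=
    tendsto_sqrt_atTop.comp tendsto_intCast_atTop_atTop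
  have hexp : Tendsto (fun x : ℝ => exp (4 * π * √A * x) / x ^ (1 : ℝ)) atTop atTop :=
    tendsto_exp_mul_div_rpow_atTop 1 _ (by positivity)
  refine (hexp.comp hsqrt).congr fun J => ?_
  rw [Function.comp_apply, rpow_one, cardyGrowth, sqrt_mul hA.le, mul_assoc (4 * π)]

lemma tendsto_laplace_div_saddleTemp (hA : 0 < A) (hT : 0 < T) (hs : IsSpectrum T ν)
    (hm : ModularInvariant A ν) (hβ : 0 < β) :
    Tendsto (fun J : ℤ => ((2 * π * (∫ h, exp (-β * h) ∂ν J) /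
        (saddleTemp A J * exp (8 * π ^ 2 * A / saddleTemp A J)) : ℝ) : ℂ)) atTop
      (𝓝 (Complex.exp (-(A * β)) * (√(π / (4 * π ^ 2 * A)) * saddleAmplitude A β 1))) := by
  obtain ⟨C, δ, hδ, hbound⟩ := exists_norm_laplace_div_sub_le hA hT hs hm hβ
  have hpos : ∀ᶠ J : ℤ in atTop, 0 < saddleTemp A J :=
    (eventually_gt_atTop 0).mono fun J => saddleTemp_pos hA
  have hzero := tendsto_saddleTemp A
  have hinv : Tendsto (fun J => (saddleTemp A J)⁻¹) atTop atTop :=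
    tendsto_inv_nhdsGT_zero.comp (tendsto_nhdsWithin_iff.2 ⟨hzero, hpos⟩)
  have herr : Tendsto (fun J => C * ((saddleTemp A J)⁻¹ ^ (2 : ℝ) * exp (-δ * (saddleTemp A J)⁻¹)))
      atTop (𝓝 0) := by
    simpa only [mul_zero, Function.comp_apply] using
      ((tendsto_rpow_mul_exp_neg_mul_atTop_nhds_zero 2 δ hδ).comp hinv).const_mul C
  have hmain := ((tendsto_integral_saddleIntegrand hA hβ).comp hzero).const_mul
    (Complex.exp (-(A * β)))
  refine tendsto_of_tendsto_of_dist hmain (squeeze_zero' (.of_forall fun _ => dist_nonneg) ?_ herr)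
  filter_upwards [hpos, hzero.eventually_le_const one_pos,
    hzero.eventually_le_const (half_pos hβ), eventually_gt_atTop 0] with J hε hε1 hεβ hJ
  rw [dist_comm, dist_eq_norm]
  exact hbound _ hε hε1 hεβ J (mul_saddleTemp_sq hA.le hJ)

lemma cardy_saddle_constant (hA : 0 < A) (hβ : 0 < β) :
    √A * (√(π / (4 * π ^ 2 * A)) * √(4 * π ^ 2 / β)) = √(π / β) := by
  rw [← sqrt_mul (by positivity), ← sqrt_mul hA.le]
  congr 1
  field_simp

theorem tendsto_laplace_div_cardyGrowth (hA : 0 < A) (hT : 0 < T) (hs : IsSpectrum T ν)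
    (hm : ModularInvariant A ν) (hβ : 0 < β) :
    Tendsto (fun J => (∫ h, exp (-β * h) ∂ν J) / cardyGrowth A J) atTop
      (𝓝 (∫ h, exp (-β * h) ∂limitTwistMeasure A)) := by
  have hlim := (tendsto_laplace_div_saddleTemp hA hT hs hm hβ).const_mul ((√A : ℝ) : ℂ)
  have hvalue : (√A : ℂ) * (Complex.exp (-(A * β)) *
      (√(π / (4 * π ^ 2 * A)) * saddleAmplitude A β 1)) =
        (∫ h, exp (-β * h) ∂limitTwistMeasure A : ℝ) := by
    rw [integral_exp_limitTwistMeasure hA.le hβ, saddleAmplitude_ofReal_one A hβ,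
      ← cardy_saddle_constant hA hβ]
    push_cast
    ring
  rw [hvalue] at hlim
  refine tendsto_ofReal_iff.1 (hlim.congr' ?_)
  filter_upwards [eventually_gt_atTop 0] with J hJ
  rw [saddleTemp_mul_exp hA hJ, ← Complex.ofReal_mul]
  congr 1
  field_simp

end CardyGrowth

/-- The large-spin spectrum becomes dense: every twist window `(a,b)` with `b > A` eventually
contains arbitrarily many states, for every sufficiently large individual spin `J`. -/
theorem spectrum_becomes_dense
    (A Tgap : ℝ) (hA : 0 < A) (hTgap : 0 < Tgap)
    (ν : ℤ → Measure ℝ) (hspec : IsSpectrum Tgap ν) (hmod : ModularInvariant A ν) :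
    ∀ a b : ℝ, a < b → A < b → ∀ M : ℝ, 0 < M →
      ∃ J0 : ℤ, ∀ J : ℤ, J0 ≤ J → ENNReal.ofReal M < (ν J) (Set.Ioo a b) := by
  intro a b hab hAb M _
  have hnonneg J : ∀ᵐ h ∂ν J, 0 ≤ h :=
    (hspec.ae_gt J).mono fun _ hh => hTgap.le.trans hh.1.le
  have hnonneg_limit : ∀ᵐ h ∂limitTwistMeasure A, 0 ≤ h :=
    (ae_le_limitTwistMeasure A).mono fun _ => hA.le.trans
  have hint_limit : Integrable (fun h => exp (-h)) (limitTwistMeasure A) := by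
    simpa using integrable_exp_limitTwistMeasure hA.le one_pos
  have hlaplace (n : ℕ) := tendsto_laplace_div_cardyGrowth hA hTgap hspec hmod
    (β := n + 1) (by positivity)
  have hblowup : Tendsto (fun J => ν J (Set.Ioo a b)) atTop (𝓝 ⊤) :=
    tendsto_measure_nhds_top_of_tendsto_laplace hnonneg hspec.integrable_exp_neg hnonneg_limit
      hint_limit (tendsto_cardyGrowth_atTop hA) hlaplace isOpen_Ioo
      (limitTwistMeasure_Ioo_ne_zero hA hab hAb)
  exact eventually_atTop.1 (hblowup.eventually_const_lt ENNReal.ofReal_lt_top)
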